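/- Let D̃ be a bounded domain in ℂ and let K ⊂ D̃ be a compact polar set. Then the restriction map L²_h(D̃) → L²_h(D̃ \ K) is a bijection, and consequently K_{D̃ \ K}(z) = K_{D̃}(z) for all z ∈ D̃ \ K. -/

import Mathlib

open MeasureTheory Filter Topology Metric Set
open scoped ENNReal NNReal

/-- Truncated circle average of an `EReal`-valued function: the average over the circle of
center `c` and radius `R` of the function truncated below at `-n`. -/
noncomputable def circleAvgTrunc (u : ℂ → EReal) (c : ℂ) (R : ℝ) (n : ℕ) : ℝ :=
  (2 * Real.pi)⁻¹ * ∫ θ in (0:ℝ)..(2 * Real.pi),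
    (max (u (c + R * Complex.exp (θ * Complex.I))) (-(n : ℝ) : EReal)).toReal

/-- `u` is subharmonic on `Ω ⊆ ℂ`: values in `[-∞, ∞)`, upper semicontinuous on `Ω`, and for
every closed disc contained in `Ω` the value at the center is at most the mean over the
boundary circle (in the extended sense, via decreasing truncations). -/
def SubharmonicOn (u : ℂ → EReal) (Ω : Set ℂ) : Prop :=
  UpperSemicontinuousOn u Ω ∧ (∀ z ∈ Ω, u z < ⊤) ∧
    ∀ c ∈ Ω, ∀ R : ℝ, 0 < R → Metric.closedBall c R ⊆ Ω →
      u c ≤ ⨅ n : ℕ, (circleAvgTrunc u c R n : EReal)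

/-- `u` is plurisubharmonic on `Ω`: values in `[-∞, ∞)`, upper semicontinuous on `Ω`, and its
restriction to every complex line is subharmonic. -/
def PlurisubharmonicOn {E : Type*} [NormedAddCommGroup E] [NormedSpace ℂ E]
    (u : E → EReal) (Ω : Set E) : Prop :=
  UpperSemicontinuousOn u Ω ∧ (∀ z ∈ Ω, u z < ⊤) ∧
    ∀ a b : E, SubharmonicOn (fun lam : ℂ => u (a + lam • b)) {lam : ℂ | a + lam • b ∈ Ω}

/-- A set `P ⊆ ℂ` is polar. -/
def PolarSet (P : Set ℂ) : Prop :=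
  ∀ z ∈ P, ∃ U : Set ℂ, IsOpen U ∧ IsConnected U ∧ z ∈ U ∧
    ∃ u : ℂ → EReal, SubharmonicOn u U ∧ (∃ x ∈ U, u x ≠ ⊥) ∧ ∀ x ∈ P ∩ U, u x = ⊥

/-- A set `P ⊆ ℂⁿ` is pluripolar. -/
def PluripolarSet {E : Type*} [NormedAddCommGroup E] [NormedSpace ℂ E] (P : Set E) : Prop :=
  ∀ z ∈ P, ∃ U : Set E, IsOpen U ∧ IsConnected U ∧ z ∈ U ∧
    ∃ u : E → EReal, PlurisubharmonicOn u U ∧ (∃ x ∈ U, u x ≠ ⊥) ∧ ∀ x ∈ P ∩ U, u x = ⊥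

/-- A domain `D` is pseudoconvex if `z ↦ -log dist(z, ∂D)` is plurisubharmonic on `D`. -/
def IsPseudoconvex {E : Type*} [NormedAddCommGroup E] [NormedSpace ℂ E] (D : Set E) : Prop :=
  PlurisubharmonicOn (fun z => ((- Real.log (Metric.infDist z Dᶜ) : ℝ) : EReal)) D

/-- The square-integrable holomorphic functions on an open set `Ω`. -/
def L2h {E : Type*} [NormedAddCommGroup E] [NormedSpace ℂ E] [MeasureSpace E]
    (Ω : Set E) : Set (E → ℂ) :=
  {f | DifferentiableOn ℂ f Ω ∧ (∫⁻ z in Ω, (‖f z‖₊ : ℝ≥0∞) ^ 2) < ⊤}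

/-- The Bergman kernel of `Ω` on the diagonal,
`K_Ω(z) = sup { |f(z)|²/‖f‖²_{L²(Ω)} : f ∈ L²ₕ(Ω), f ≢ 0 }`. -/
noncomputable def bergmanKernel {E : Type*} [NormedAddCommGroup E] [NormedSpace ℂ E]
    [MeasureSpace E] (Ω : Set E) (z : E) : ℝ≥0∞ :=
  ⨆ (f : E → ℂ) (_ : f ∈ L2h Ω) (_ : ∃ w ∈ Ω, f w ≠ 0),
    (‖f z‖₊ : ℝ≥0∞) ^ 2 / ∫⁻ w in Ω, (‖f w‖₊ : ℝ≥0∞) ^ 2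

/-- `D` is an `L²ₕ`-domain of holomorphy: there are no domains `D₀, D₁` with
`∅ ≠ D₀ ⊆ D₁ ∩ D`, `D₁ ⊄ D`, such that every `f ∈ L²ₕ(D)` extends holomorphically to `D₁`
(agreeing with `f` on `D₀`). -/
def IsL2hDomainOfHolomorphy {E : Type*} [NormedAddCommGroup E] [NormedSpace ℂ E]
    [MeasureSpace E] (D : Set E) : Prop :=
  ¬ ∃ D0 D1 : Set E, IsOpen D0 ∧ IsConnected D0 ∧ IsOpen D1 ∧ IsConnected D1 ∧
      D0 ⊆ D1 ∩ D ∧ ¬ (D1 ⊆ D) ∧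
      ∀ f ∈ L2h D, ∃ F : E → ℂ, DifferentiableOn ℂ F D1 ∧ Set.EqOn F f D0

/-- `w` is a regular boundary point of the domain `D ⊆ ℂ`. -/
def RegularBoundaryPt (D : Set ℂ) (w : ℂ) : Prop :=
  ∃ U : Set ℂ, IsOpen U ∧ w ∈ U ∧ ∃ u : ℂ → EReal, SubharmonicOn u (U ∩ D) ∧
    (∀ z ∈ U ∩ D, u z < 0) ∧ Tendsto u (𝓝[U ∩ D] w) (𝓝 (0 : EReal))

/-- The (pluricomplex) Green function of a domain `D ⊆ ℂ` with logarithmic pole at `p`. -/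
noncomputable def greenFn (D : Set ℂ) (p z : ℂ) : EReal :=
  sSup {v : EReal | ∃ u : ℂ → EReal, SubharmonicOn u D ∧ (∀ x ∈ D, u x < 0) ∧
    (∃ C : ℝ, ∀ᶠ x in 𝓝 p, u x ≤ ((Real.log ‖x - p‖ + C : ℝ) : EReal)) ∧ v = u z}

/-- A polydisc in `ℂⁿ` with centre `c` and multiradius `r`. -/
def polydisc {n : ℕ} (c : Fin n → ℂ) (r : Fin n → ℝ) : Set (Fin n → ℂ) :=
  {z | ∀ i, ‖z i - c i‖ < r i}

/-!
A polar set is locally contained in `{u = -∞}` for a subharmonic `u ≢ -∞`. The truncations of `-u`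
are superharmonic, at least `1` after adding a constant, and bounded in `L¹` uniformly in the
truncation level. If `v ≥ 1` is superharmonic then `Δ (log v) ≤ -|∇ log v|²`, so that testing with
a cutoff bounds the Dirichlet integral of `log v` independently of `v`. Hence the functions `log v`
tend to infinity near `K` with bounded `W^{1,2}` norm, and composing small multiples of them with a
fixed cutoff yields functions which equal `1` near `K` and are arbitrarily small in `W^{1,2}`.

Let now `f` be holomorphic and square-integrable off `K`, and let `χ` be such a function. In the
Cauchy–Pompeiu formula for the product of `f` with `1 - χ` and a cutoff of the ambient disc, the
term with `f ∂̄χ` tends to `0` by the Cauchy–Schwarz inequality; what remains is an integral over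
an annulus which is holomorphic across `K`.
-/

section

open Real Complex InnerProductSpace ComplexConjugate Laplacian

section PolarCoordinates

variable {E : Type*} [NormedAddCommGroup E] [NormedSpace ℝ E]

theorem integrableOn_polarCoord_symm {f : ℂ → E} (hf : Integrable f) :
    IntegrableOn (fun p : ℝ × ℝ => p.1 • f (Complex.polarCoord.symm p)) (Ioi 0 ×ˢ Ioo (-π) π) := by
  have hf' : Integrable fun p : ℝ × ℝ => f (measurableEquivRealProd.symm p) :=
    (volume_preserving_equiv_real_prod.symm _).integrable_comp_of_integrable hf
  have h := (integrableOn_image_iff_integrableOn_abs_det_fderiv_smul volume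
    polarCoord.open_target.measurableSet
    (fun p _ => (hasFDerivAt_polarCoord_symm p).hasFDerivWithinAt) polarCoord.symm.injOn _).1
    (hf'.integrableOn (s := polarCoord.symm '' polarCoord.target))
  refine h.congr_fun (fun p hp => ?_) polarCoord.open_target.measurableSet
  have hp : 0 < p.1 := hp.1
  simp only [det_fderivPolarCoordSymm, abs_of_pos hp,
    measurableEquivRealProd_symm_polarCoord_symm_apply]

theorem integral_polarCoord_symm_eq_smul_circleAverage (f : ℂ → E) (c : ℂ) (r : ℝ) :
    ∫ θ in Ioo (-π) π, f (c + Complex.polarCoord.symm (r, θ)) =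
      (2 * π) • circleAverage f c r := by
  have hper : Function.Periodic (fun θ => f (circleMap c r θ)) (2 * π) :=
    fun θ => by simp only [periodic_circleMap c r θ]
  have hshift := hper.intervalIntegral_add_eq 0 (-π)
  rw [zero_add, show -π + 2 * π = π by ring] at hshift
  rw [circleAverage_def, smul_inv_smul₀ Real.two_pi_pos.ne', hshift,
    intervalIntegral.integral_of_le (by linarith [pi_pos]), integral_Ioc_eq_integral_Ioo]
  simp [circleMap, Complex.exp_mul_I]

theorem integral_polarCoord_symm_smul_eq_smul_circleAverage (f : ℂ → E) (c : ℂ) (r : ℝ) :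
    ∫ θ in Ioo (-π) π, r • f (c + Complex.polarCoord.symm (r, θ)) =
      (2 * π * r) • circleAverage f c r := by
  rw [integral_smul, integral_polarCoord_symm_eq_smul_circleAverage, smul_smul, mul_comm]

theorem integrableOn_smul_circleAverage {f : ℂ → E} (hf : Integrable f) (c : ℂ) :
    IntegrableOn (fun r : ℝ => (2 * π * r) • circleAverage f c r) (Ioi 0) := by
  have h := integrableOn_polarCoord_symm (hf.comp_add_left c)
  rw [IntegrableOn, Measure.volume_eq_prod, ← Measure.prod_restrict] at h
  exact h.integral_prod_left.congr
    (.of_forall (integral_polarCoord_symm_smul_eq_smul_circleAverage f c))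

theorem integral_eq_integral_smul_circleAverage {f : ℂ → E} (hf : Integrable f) (c : ℂ) :
    ∫ z, f z = ∫ r in Ioi (0 : ℝ), (2 * π * r) • circleAverage f c r := by
  rw [← integral_add_left_eq_self f c, ← Complex.integral_comp_polarCoord_symm]
  exact (setIntegral_prod _ (integrableOn_polarCoord_symm (hf.comp_add_left c))).trans
    (integral_congr_ae (.of_forall (integral_polarCoord_symm_smul_eq_smul_circleAverage f c)))

theorem setIntegral_ball_le_of_circleAverage_le {f : ℂ → ℝ} {c : ℂ} {R M : ℝ} (hR : 0 ≤ R)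
    (hf : IntegrableOn f (ball c R))
    (hM : ∀ r ∈ Ioo 0 R, circleAverage f c r ≤ M) :
    ∫ z in ball c R, f z ≤ π * R ^ 2 * M := by
  have hf' := hf.integrable_indicator measurableSet_ball
  have hzero : ∀ r, r ∈ Ioi 0 \ Ioo 0 R →
      (2 * π * r) • circleAverage ((ball c R).indicator f) c r = 0 := by
    rintro r ⟨hr, hrR⟩
    have hr : 0 < r := hr
    have hrR : R ≤ r := not_lt.1 fun h => hrR ⟨hr, h⟩
    rw [circleAverage_congr_sphere (f₂ := fun _ => (0 : ℝ)) fun z hz => ?_, circleAverage_const,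
      smul_zero]
    rw [mem_sphere, abs_of_pos hr] at hz
    exact indicator_of_notMem (by simp [hz, hrR]) f
  have hbound : ∀ r ∈ Ioo 0 R,
      (2 * π * r) • circleAverage ((ball c R).indicator f) c r ≤ 2 * π * r * M := by
    intro r hr
    rw [circleAverage_congr_sphere (f₂ := f) fun z hz => ?_, smul_eq_mul]
    · have := hr.1
      gcongr
      exact hM r hr
    · rw [mem_sphere, abs_of_pos hr.1] at hz
      exact indicator_of_mem (by simp [hz, hr.2]) f
  rw [← integral_indicator measurableSet_ball, integral_eq_integral_smul_circleAverage hf' c,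
    setIntegral_eq_of_subset_of_forall_sdiff_eq_zero measurableSet_Ioi (fun r hr => hr.1) hzero]
  calc ∫ r in Ioo 0 R, (2 * π * r) • circleAverage ((ball c R).indicator f) c r
      ≤ ∫ r in Ioo 0 R, 2 * π * r * M := setIntegral_mono_on
        ((integrableOn_smul_circleAverage hf' c).mono_set fun r hr => hr.1)
        ((Continuous.integrableOn_Icc (by fun_prop)).mono_set Ioo_subset_Icc_self)
        measurableSet_Ioo hbound
    _ = π * R ^ 2 * M := by
        rw [← integral_Ioc_eq_integral_Ioo, ← intervalIntegral.integral_of_le hR,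
          intervalIntegral.integral_mul_const, intervalIntegral.integral_const_mul, integral_id]
        ring

end PolarCoordinates

section CauchyPompeiu

/-- The Wirtinger derivative `∂f/∂z̄` of a function that need not be holomorphic. -/
noncomputable def dbar (f : ℂ → ℂ) (z : ℂ) : ℂ :=
  (fderiv ℝ f z 1 + I * fderiv ℝ f z I) / 2

variable {f g φ : ℂ → ℂ} {z : ℂ}

theorem norm_dbar_le (f : ℂ → ℂ) (z : ℂ) : ‖dbar f z‖ ≤ ‖fderiv ℝ f z‖ := by
  have h1 : ‖fderiv ℝ f z 1‖ ≤ ‖fderiv ℝ f z‖ := by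
    simpa using (fderiv ℝ f z).le_opNorm 1
  have hI : ‖fderiv ℝ f z I‖ ≤ ‖fderiv ℝ f z‖ := by
    simpa using (fderiv ℝ f z).le_opNorm I
  rw [dbar, norm_div, div_le_iff₀ (by simp)]
  calc ‖fderiv ℝ f z 1 + I * fderiv ℝ f z I‖
      ≤ ‖fderiv ℝ f z 1‖ + ‖fderiv ℝ f z I‖ := by
        simpa using norm_add_le (fderiv ℝ f z 1) (I * fderiv ℝ f z I)
    _ ≤ ‖fderiv ℝ f z‖ * ‖(2 : ℂ)‖ := by simp; linarith

theorem norm_dbar_ofReal_le {χ : ℂ → ℝ} (hχ : DifferentiableAt ℝ χ z) :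
    ‖dbar (fun w => (χ w : ℂ)) z‖ ≤ ‖fderiv ℝ χ z‖ := by
  refine (norm_dbar_le _ z).trans ?_
  have h : HasFDerivAt (fun w => (χ w : ℂ)) (ofRealCLM ∘L fderiv ℝ χ z) z :=
    ofRealCLM.hasFDerivAt.comp z hχ.hasFDerivAt
  rw [h.fderiv]
  refine (ofRealCLM.opNorm_comp_le _).trans ?_
  simp

theorem dbar_congr (h : f =ᶠ[𝓝 z] g) : dbar f z = dbar g z := by
  rw [dbar, dbar, h.fderiv_eq]

theorem dbar_eq_zero_of_differentiableAt (hf : DifferentiableAt ℂ f z) : dbar f z = 0 := by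
  rw [dbar, (hf.hasFDerivAt.restrictScalars ℝ).fderiv]
  have h : fderiv ℂ f z I = I * fderiv ℂ f z 1 := by
    rw [← smul_eq_mul, ← map_smul, smul_eq_mul, mul_one]
  simp [h, ← mul_assoc]

theorem dbar_mul (hf : DifferentiableAt ℝ f z) (hg : DifferentiableAt ℝ g z) :
    dbar (fun w => f w * g w) z = dbar f z * g z + f z * dbar g z := by
  simp only [dbar, fderiv_fun_mul hf hg, add_apply, smul_apply, smul_eq_mul]
  ring

theorem dbar_eq_zero_of_notMem_tsupport (hz : z ∉ tsupport f) : dbar f z = 0 := by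
  rw [dbar_congr (notMem_tsupport_iff_eventuallyEq.1 hz)]
  simp [dbar]

theorem hasCompactSupport_dbar (hf : HasCompactSupport f) : HasCompactSupport (dbar f) :=
  .intro hf fun _ => dbar_eq_zero_of_notMem_tsupport

theorem continuous_dbar (hf : ContDiff ℝ 1 f) : Continuous (dbar f) := by
  have h (v : ℂ) : Continuous fun z => fderiv ℝ f z v :=
    (hf.continuous_fderiv one_ne_zero).clm_apply continuous_const
  exact ((h 1).add (continuous_const.mul (h I))).div_const 2

theorem hasDerivAt_circleAverage_radius (hφ : ContDiff ℝ 1 φ) (hφc : HasCompactSupport φ)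
    (c : ℂ) (r : ℝ) :
    HasDerivAt (circleAverage φ c)
      ((2 * π)⁻¹ • ∫ θ in 0..2 * π, fderiv ℝ φ (circleMap c r θ) (exp (θ * I))) r := by
  obtain ⟨C, hC⟩ := (hφ.continuous_fderiv one_ne_zero).bounded_above_of_compact_support
    (hφc.fderiv ℝ)
  have hcont (r : ℝ) : Continuous fun θ => fderiv ℝ φ (circleMap c r θ) (exp (θ * I)) :=
    ((hφ.continuous_fderiv one_ne_zero).comp (by fun_prop)).clm_apply (by fun_prop)
  have hderiv (θ r : ℝ) : HasDerivAt (fun r => φ (circleMap c r θ))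
      (fderiv ℝ φ (circleMap c r θ) (exp (θ * I))) r := by
    refine (hφ.differentiable one_ne_zero _).hasFDerivAt.comp_hasDerivAt r ?_
    simpa [circleMap] using ((hasDerivAt_id r).ofReal_comp.mul_const (exp (θ * I))).const_add c
  refine (intervalIntegral.hasDerivAt_integral_of_dominated_loc_of_deriv_le (μ := volume)
    (F := fun r θ => φ (circleMap c r θ))
    (F' := fun r θ => fderiv ℝ φ (circleMap c r θ) (exp (θ * I))) (bound := fun _ => C) univ_mem
    (.of_forall fun r => ?_) ?_ ?_ ?_ intervalIntegrable_const ?_).2.const_smul _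
  · exact (hφ.continuous.comp (by fun_prop)).aestronglyMeasurable
  · exact (hφ.continuous.comp (by fun_prop)).intervalIntegrable _ _
  · exact (hcont r).aestronglyMeasurable
  · refine .of_forall fun θ _ r _ => (ContinuousLinearMap.le_opNorm _ _).trans ?_
    simpa [norm_exp_ofReal_mul_I] using hC (circleMap c r θ)
  · exact .of_forall fun θ _ r _ => hderiv θ r

theorem integral_fderiv_circleMap_tangent_eq_zero (hφ : ContDiff ℝ 1 φ) (c : ℂ) (r : ℝ) :
    ∫ θ in 0..2 * π, fderiv ℝ φ (circleMap c r θ) (circleMap 0 r θ * I) = 0 := by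
  have hderiv (θ : ℝ) : HasDerivAt (fun θ => φ (circleMap c r θ))
      (fderiv ℝ φ (circleMap c r θ) (circleMap 0 r θ * I)) θ :=
    (hφ.differentiable one_ne_zero _).hasFDerivAt.comp_hasDerivAt θ (hasDerivAt_circleMap c r θ)
  rw [intervalIntegral.integral_eq_sub_of_hasDerivAt (fun θ _ => hderiv θ)]
  · simp [circleMap]
  · exact (((hφ.continuous_fderiv one_ne_zero).comp (by fun_prop)).clm_apply
      (by fun_prop)).intervalIntegrable _ _

theorem fderiv_add_I_mul_fderiv_mul_I (φ : ℂ → ℂ) (z h : ℂ) :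
    fderiv ℝ φ z h + I * fderiv ℝ φ z (h * I) = 2 * dbar φ z * conj h := by
  have hh : h = h.re • (1 : ℂ) + h.im • I := by simp
  have hI : h * I = (-h.im) • (1 : ℂ) + h.re • I := by
    apply Complex.ext <;> simp
  have hconj : conj h = h.re - h.im * I := by
    apply Complex.ext <;> simp
  rw [hI, map_add, map_smul, map_smul, dbar, hconj]
  nth_rw 1 [hh]
  rw [map_add, map_smul, map_smul]
  simp only [real_smul]
  push_cast
  linear_combination (h.im * fderiv ℝ φ z I) * I_mul_I

theorem mul_dbar_div_circleMap_sub (φ : ℂ → ℂ) (c : ℂ) {r : ℝ} (hr : r ≠ 0) (θ : ℝ) :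
    2 * r * (dbar φ (circleMap c r θ) / (circleMap c r θ - c)) =
      fderiv ℝ φ (circleMap c r θ) (exp (θ * I)) +
        I / r * fderiv ℝ φ (circleMap c r θ) (circleMap 0 r θ * I) := by
  have htangent : circleMap 0 r θ * I = r • (exp (θ * I) * I) := by
    simp [circleMap, mul_assoc]
  have hconj : conj (exp (θ * I)) = (exp (θ * I))⁻¹ := by
    rw [← exp_conj, ← Complex.exp_neg]
    simp
  have hr' : (r : ℂ) ≠ 0 := ofReal_ne_zero.2 hr
  have hexp : exp (θ * I) ≠ 0 := exp_ne_zero _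
  rw [htangent, map_smul, real_smul, ← mul_assoc, div_mul_cancel₀ _ hr',
    fderiv_add_I_mul_fderiv_mul_I, hconj, circleMap_sub_center, circleMap_zero]
  field_simp

theorem hasDerivAt_pi_smul_circleAverage (hφ : ContDiff ℝ 1 φ) (hφc : HasCompactSupport φ)
    (c : ℂ) {r : ℝ} (hr : 0 < r) :
    HasDerivAt (fun r => π • circleAverage φ c r)
      ((2 * π * r) • circleAverage (fun z => dbar φ z / (z - c)) c r) r := by
  have hcont {v : ℝ → ℂ} (hv : Continuous v) :
      Continuous fun θ => fderiv ℝ φ (circleMap c r θ) (v θ) :=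
    ((hφ.continuous_fderiv one_ne_zero).comp (by fun_prop)).clm_apply hv
  refine ((hasDerivAt_circleAverage_radius hφ hφc c r).const_smul π).congr_deriv ?_
  suffices ∫ θ in 0..2 * π, fderiv ℝ φ (circleMap c r θ) (exp (θ * I)) =
      ∫ θ in 0..2 * π, 2 * r * (dbar φ (circleMap c r θ) / (circleMap c r θ - c)) by
    rw [this, intervalIntegral.integral_const_mul, circleAverage_def]
    simp only [real_smul]
    push_cast
    ring
  simp_rw [mul_dbar_div_circleMap_sub φ c hr.ne']
  rw [intervalIntegral.integral_add ((hcont (by fun_prop)).intervalIntegrable _ _)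
      (((hcont (by fun_prop)).intervalIntegrable _ _).const_mul _),
    intervalIntegral.integral_const_mul, integral_fderiv_circleMap_tangent_eq_zero hφ, mul_zero,
    add_zero]

theorem locallyIntegrable_inv : LocallyIntegrable fun z : ℂ => z⁻¹ := by
  have hball (R : ℝ) : IntegrableOn (fun z : ℂ => ‖z‖⁻¹) (ball 0 R) := by
    refine (integrableOn_fun_norm_addHaar volume (f := fun r : ℝ => r⁻¹)).2 ?_
    refine (integrableOn_const (C := (1 : ℝ)) (by simp)).congr_fun (fun r hr => ?_)
      measurableSet_Ioo
    simp [hr.1.ne']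
  refine fun z => ⟨ball 0 (‖z‖ + 1), isOpen_ball.mem_nhds (by simp), ?_⟩
  refine (integrable_norm_iff (by fun_prop)).1 ?_
  simp only [norm_inv]
  exact hball (‖z‖ + 1)

theorem integrable_div_sub (hg : Continuous g) (hgc : HasCompactSupport g) (c : ℂ) :
    Integrable fun z => g z / (z - c) := by
  have h := locallyIntegrable_inv.integrable_smul_left_of_hasCompactSupport
    (hg.comp (continuous_add_const c)) (hgc.comp_homeomorph (.addRight c))
  simpa [div_eq_mul_inv] using h.comp_sub_right c

theorem integral_dbar_div_sub (hφ : ContDiff ℝ 1 φ) (hφc : HasCompactSupport φ) (c : ℂ) :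
    ∫ z, dbar φ z / (z - c) = -π * φ c := by
  have hint := integrable_div_sub (continuous_dbar hφ) (hasCompactSupport_dbar hφc) c
  have hzero : ∀ᶠ r : ℝ in atTop, π • circleAverage φ c r = 0 := by
    obtain ⟨R, hR⟩ := hφc.isCompact.isBounded.subset_closedBall c
    filter_upwards [eventually_gt_atTop R, eventually_gt_atTop 0] with r hr hr0
    rw [circleAverage_congr_sphere (f₂ := fun _ => (0 : ℂ)) fun z hz => ?_, circleAverage_const,
      smul_zero]
    refine image_eq_zero_of_notMem_tsupport fun hz' => ?_
    rw [mem_sphere, abs_of_pos hr0] at hz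
    exact hr.not_ge (hz ▸ mem_closedBall.1 (hR hz'))
  rw [integral_eq_integral_smul_circleAverage hint c, integral_Ioi_of_hasDerivAt_of_tendsto
    (hφ.continuous.circleAverage.const_smul π).continuousWithinAt
    (fun r hr => hasDerivAt_pi_smul_circleAverage hφ hφc c hr)
    (integrableOn_smul_circleAverage hint c) (tendsto_const_nhds.congr' (EventuallyEq.symm hzero))]
  simp

end CauchyPompeiu

section Removability

variable {f g φ η : ℂ → ℂ} {S Ω E : Set ℂ} {z : ℂ}

theorem dbar_sub (hf : DifferentiableAt ℝ f z) (hg : DifferentiableAt ℝ g z) :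
    dbar (fun w => f w - g w) z = dbar f z - dbar g z := by
  simp only [dbar, fderiv_fun_sub hf hg, sub_apply]
  ring

theorem dbar_mul_of_differentiableAt (hf : DifferentiableAt ℝ f z) (hg : DifferentiableAt ℂ g z) :
    dbar (fun w => f w * g w) z = dbar f z * g z := by
  rw [dbar_mul hf (hg.restrictScalars ℝ), dbar_eq_zero_of_differentiableAt hg, mul_zero, add_zero]

/-- Cauchy–Pompeiu applied to `φ(z) z` at the origin. -/
theorem integral_dbar_eq_zero (hφ : ContDiff ℝ 1 φ) (hφc : HasCompactSupport φ) :
    ∫ z, dbar φ z = 0 := by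
  have hPompeiu := integral_dbar_div_sub (hφ.mul contDiff_id) hφc.mul_right 0
  rw [id, mul_zero, mul_zero] at hPompeiu
  rw [← hPompeiu]
  refine integral_congr_ae ?_
  filter_upwards [compl_mem_ae_iff.2 (measure_singleton (0 : ℂ))] with z hz
  rw [dbar_mul_of_differentiableAt (hφ.differentiable one_ne_zero z) differentiableAt_id, sub_zero,
    id, mul_div_cancel_right₀ _ hz]

theorem contDiff_mul_of_differentiableOn (hφ : ContDiff ℝ 1 φ) (hS : IsOpen S)
    (hφS : tsupport φ ⊆ S) (hg : DifferentiableOn ℂ g S) :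
    ContDiff ℝ 1 fun z => φ z * g z := by
  refine contDiff_iff_contDiffAt.2 fun z => ?_
  by_cases hz : z ∈ tsupport φ
  · exact hφ.contDiffAt.mul
      ((hg.analyticAt (hS.mem_nhds (hφS hz))).contDiffAt.restrict_scalars ℝ)
  · refine (contDiffAt_const (c := (0 : ℂ))).congr_of_eventuallyEq ?_
    filter_upwards [notMem_tsupport_iff_eventuallyEq.1 hz] with w hw
    simp [hw]

theorem integral_dbar_mul_eq_zero_of_tsupport_subset (hφ : ContDiff ℝ 1 φ)
    (hφc : HasCompactSupport φ) (hS : IsOpen S) (hφS : tsupport φ ⊆ S)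
    (hg : DifferentiableOn ℂ g S) :
    ∫ z, dbar φ z * g z = 0 := by
  rw [← integral_dbar_eq_zero (contDiff_mul_of_differentiableOn hφ hS hφS hg) hφc.mul_right]
  refine integral_congr_ae (.of_forall fun z => ?_)
  by_cases hz : z ∈ tsupport φ
  · exact (dbar_mul_of_differentiableAt (hφ.differentiable one_ne_zero z)
      (hg.differentiableAt (hS.mem_nhds (hφS hz)))).symm
  · simp only [dbar_eq_zero_of_notMem_tsupport hz, zero_mul,
      dbar_eq_zero_of_notMem_tsupport fun h => hz (tsupport_mul_subset_left h)]

/-- `E` has zero `W^{1,2}(Ω)`-capacity: there are smooth functions equal to `1` near `E` whose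
Sobolev norm on `Ω` is arbitrarily small. -/
def HasZeroCapacityIn (E Ω : Set ℂ) : Prop :=
  ∀ ε : ℝ≥0∞, 0 < ε → ∃ χ : ℂ → ℝ, ContDiff ℝ 1 χ ∧ (∀ᶠ z in 𝓝ˢ E, χ z = 1) ∧
    eLpNorm χ 2 (volume.restrict Ω) ≤ ε ∧ eLpNorm (fderiv ℝ χ) 2 (volume.restrict Ω) ≤ ε

theorem HasZeroCapacityIn.measure_inter_eq_zero (hE : HasZeroCapacityIn E Ω) :
    volume (E ∩ Ω) = 0 := by
  have hle (ε : ℝ≥0∞) (hε : 0 < ε) : volume (E ∩ Ω) ≤ ε ^ 2 := by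
    obtain ⟨χ, hχ, hχE, hχ2, -⟩ := hE ε hε
    have hχ2' := (mul_meas_ge_le_pow_eLpNorm' (volume.restrict Ω) two_ne_zero ENNReal.ofNat_ne_top
      hχ.continuous.aestronglyMeasurable 1).trans (ENNReal.rpow_le_rpow hχ2 zero_le_two)
    calc volume (E ∩ Ω) ≤ volume.restrict Ω E := Measure.le_restrict_apply ..
      _ ≤ volume.restrict Ω {z | 1 ≤ ‖χ z‖ₑ} :=
        measure_mono fun z hz => by simp [hχE.self_of_nhdsSet z hz]
      _ ≤ ε ^ 2 := by simpa using hχ2'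
  have hlim : Tendsto (fun ε : ℝ≥0∞ => ε ^ 2) (𝓝[>] 0) (𝓝 0) :=
    ((ENNReal.continuous_pow 2).tendsto' 0 0 (by simp)).mono_left nhdsWithin_le_nhds
  exact nonpos_iff_eq_zero.1 (ge_of_tendsto hlim (eventually_mem_nhdsWithin.mono hle))

theorem exists_eLpNorm_dbar_mul_le (hη : ContDiff ℝ 1 η) (hηc : HasCompactSupport η) :
    ∃ C : ℝ≥0, ∀ χ : ℂ → ℝ, ContDiff ℝ 1 χ → ∀ μ : Measure ℂ,
      eLpNorm (dbar fun w => η w * χ w) 2 μ ≤ C * (eLpNorm χ 2 μ + eLpNorm (fderiv ℝ χ) 2 μ) := by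
  obtain ⟨A, hA⟩ := hη.continuous.bounded_above_of_compact_support hηc
  obtain ⟨B, hB⟩ :=
    (continuous_dbar hη).bounded_above_of_compact_support (hasCompactSupport_dbar hηc)
  have hA' : A ≤ max A B := le_max_left A B
  have hB' : B ≤ max A B := le_max_right A B
  refine ⟨(max A B).toNNReal, fun χ hχ μ => ?_⟩
  have hpoint (z : ℂ) : ‖dbar (fun w => η w * χ w) z‖ ≤
      (max A B).toNNReal * ‖‖χ z‖ + ‖fderiv ℝ χ z‖‖ := by
    have hχz := hχ.differentiable one_ne_zero z
    have hχz' : DifferentiableAt ℝ (fun w => (χ w : ℂ)) z := ofRealCLM.differentiableAt.comp z hχz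
    rw [dbar_mul (hη.differentiable one_ne_zero z) hχz',
      Real.coe_toNNReal _ (((norm_nonneg _).trans (hA z)).trans hA'),
      Real.norm_of_nonneg (by positivity)]
    calc ‖dbar η z * χ z + η z * dbar (fun w => (χ w : ℂ)) z‖
        ≤ ‖dbar η z‖ * ‖χ z‖ + ‖η z‖ * ‖dbar (fun w => (χ w : ℂ)) z‖ := by
          simpa using norm_add_le (dbar η z * χ z) (η z * dbar (fun w => (χ w : ℂ)) z)
      _ ≤ max A B * ‖χ z‖ + max A B * ‖fderiv ℝ χ z‖ := by
          gcongr
          · exact (hB z).trans hB'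
          · exact ((norm_nonneg _).trans (hA z)).trans hA'
          · exact (hA z).trans hA'
          · exact norm_dbar_ofReal_le hχz
      _ = max A B * (‖χ z‖ + ‖fderiv ℝ χ z‖) := by ring
  calc eLpNorm (dbar fun w => η w * χ w) 2 μ
      ≤ (max A B).toNNReal * eLpNorm (fun z => ‖χ z‖ + ‖fderiv ℝ χ z‖) 2 μ :=
        eLpNorm_le_nnreal_smul_eLpNorm_of_ae_le_mul (.of_forall hpoint) 2
    _ ≤ (max A B).toNNReal * (eLpNorm χ 2 μ + eLpNorm (fderiv ℝ χ) 2 μ) := by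
        gcongr
        refine (eLpNorm_add_le hχ.continuous.norm.aestronglyMeasurable
          (hχ.continuous_fderiv one_ne_zero).norm.aestronglyMeasurable one_le_two).trans ?_
        rw [eLpNorm_norm, eLpNorm_norm]

theorem enorm_integral_mul_le (μ : Measure ℂ) (hf : AEStronglyMeasurable f μ)
    (hg : AEStronglyMeasurable g μ) :
    ‖∫ z, f z * g z ∂μ‖ₑ ≤ eLpNorm f 2 μ * eLpNorm g 2 μ := by
  refine (enorm_integral_le_lintegral_enorm _).trans ?_
  rw [← eLpNorm_one_eq_lintegral_enorm]
  have hholder := eLpNorm_smul_le_mul_eLpNorm (p := 2) (q := 2) (r := 1) hg hf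
  exact hholder

theorem integrable_dbar_mul {μ : Measure ℂ} (hη : ContDiff ℝ 1 η) (hηc : HasCompactSupport η)
    (hg : Integrable g μ) : Integrable (fun z => dbar η z * g z) μ := by
  obtain ⟨C, hC⟩ :=
    (continuous_dbar hη).bounded_above_of_compact_support (hasCompactSupport_dbar hηc)
  exact hg.bdd_mul (continuous_dbar hη).aestronglyMeasurable (.of_forall hC)

/-- Multiplying by `χ` does not change the pairing, because `η (1 - χ)` has compact support in the
domain of holomorphy. -/
theorem integral_dbar_mul_eq_integral_dbar_mul_cutoff (hΩE : IsOpen (Ω \ E))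
    (hη : ContDiff ℝ 1 η) (hηc : HasCompactSupport η) (hηΩ : tsupport η ⊆ Ω)
    (hg : DifferentiableOn ℂ g (Ω \ E)) (hgi : IntegrableOn g (Ω \ E))
    {χ : ℂ → ℝ} (hχ : ContDiff ℝ 1 χ) (hχE : ∀ᶠ z in 𝓝ˢ E, χ z = 1) :
    ∫ z in Ω \ E, dbar η z * g z = ∫ z in Ω \ E, dbar (fun w => η w * χ w) z * g z := by
  have hηχ : ContDiff ℝ 1 fun w => η w * χ w := hη.mul (ofRealCLM.contDiff.comp hχ)
  have hsupp : tsupport (fun w => η w - η w * χ w) ⊆ Ω \ E := by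
    refine fun z hz => ⟨hηΩ ?_, fun hzE => ?_⟩
    · have hmul : tsupport (fun w => η w * (1 - χ w)) ⊆ tsupport η := tsupport_mul_subset_left
      exact hmul (by simpa only [mul_sub, mul_one] using hz)
    · refine notMem_tsupport_iff_eventuallyEq.2 ?_ hz
      filter_upwards [eventually_nhdsSet_iff_forall.1 hχE z hzE] with w hw
      simp [hw]
  have hzero := integral_dbar_mul_eq_zero_of_tsupport_subset (hη.sub hηχ) (hηc.sub hηc.mul_right)
    hΩE hsupp hg
  rw [← setIntegral_eq_integral_of_forall_compl_eq_zero fun z hz => by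
    rw [dbar_eq_zero_of_notMem_tsupport fun h => hz (hsupp h), zero_mul]] at hzero
  rw [← sub_eq_zero, ← integral_sub (integrable_dbar_mul hη hηc hgi)
    (integrable_dbar_mul hηχ hηc.mul_right hgi), ← hzero]
  refine integral_congr_ae (.of_forall fun z => ?_)
  simp only [dbar_sub (hη.differentiable one_ne_zero z) (hηχ.differentiable one_ne_zero z)]
  ring

theorem HasZeroCapacityIn.integral_dbar_mul_eq_zero (hE : HasZeroCapacityIn E Ω)
    (hΩE : IsOpen (Ω \ E)) (hη : ContDiff ℝ 1 η) (hηc : HasCompactSupport η)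
    (hηΩ : tsupport η ⊆ Ω) (hg : DifferentiableOn ℂ g (Ω \ E)) (hgi : IntegrableOn g (Ω \ E))
    (hg2 : MemLp g 2 (volume.restrict (Ω \ E))) :
    ∫ z in Ω \ E, dbar η z * g z = 0 := by
  obtain ⟨C, hC⟩ := exists_eLpNorm_dbar_mul_le hη hηc
  set μ := volume.restrict (Ω \ E)
  have hμ : μ ≤ volume.restrict Ω := Measure.restrict_mono sdiff_subset le_rfl
  have hle (ε : ℝ≥0∞) (hε : 0 < ε) :
      ‖∫ z, dbar η z * g z ∂μ‖ₑ ≤ C * (ε + ε) * eLpNorm g 2 μ := by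
    obtain ⟨χ, hχ, hχE, hχ2, hχ2'⟩ := hE ε hε
    have hηχ : ContDiff ℝ 1 fun w => η w * χ w := hη.mul (ofRealCLM.contDiff.comp hχ)
    rw [integral_dbar_mul_eq_integral_dbar_mul_cutoff hΩE hη hηc hηΩ hg hgi hχ hχE]
    refine (enorm_integral_mul_le μ (continuous_dbar hηχ).aestronglyMeasurable hg2.1).trans ?_
    gcongr
    refine (hC χ hχ μ).trans ?_
    gcongr
    · exact (eLpNorm_mono_measure χ hμ).trans hχ2
    · exact (eLpNorm_mono_measure (fderiv ℝ χ) hμ).trans hχ2'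
  have hlim : Tendsto (fun ε : ℝ≥0∞ => C * (ε + ε) * eLpNorm g 2 μ) (𝓝[>] 0) (𝓝 0) := by
    refine Tendsto.mono_left ?_ nhdsWithin_le_nhds
    have h := ENNReal.Tendsto.mul_const (ENNReal.Tendsto.const_mul
      ((continuous_id.add continuous_id).tendsto' (0 : ℝ≥0∞) 0 (by simp))
      (.inr (ENNReal.coe_ne_top (r := C)))) (.inr hg2.2.ne)
    simpa using h
  exact enorm_eq_zero.1 (nonpos_iff_eq_zero.1
    (ge_of_tendsto hlim (eventually_mem_nhdsWithin.mono hle)))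

theorem memLp_dslope {p : ℝ≥0∞} (hS : IsOpen S) (hS' : volume S ≠ ⊤)
    (hf : DifferentiableOn ℂ f S) (hfp : MemLp f p (volume.restrict S)) (hz : z ∈ S) :
    MemLp (dslope f z) p (volume.restrict S) := by
  have hcont : ContinuousOn (dslope f z) S :=
    (continuousOn_dslope (hS.mem_nhds hz)).2
      ⟨hf.continuousOn, hf.differentiableAt (hS.mem_nhds hz)⟩
  obtain ⟨δ, hδ, hbound⟩ := Metric.eventually_nhds_iff.1
    ((hcont.continuousAt (hS.mem_nhds hz)).norm.eventually_le_const (lt_add_one ‖dslope f z z‖))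
  have : IsFiniteMeasure (volume.restrict S) := ⟨by simpa using hS'.lt_top⟩
  refine ((memLp_const (‖dslope f z z‖ + 1)).add
    ((hfp.sub (memLp_const (f z))).norm.const_mul δ⁻¹)).mono'
    (hcont.aestronglyMeasurable hS.measurableSet) (.of_forall fun w => ?_)
  rcases lt_or_ge (dist w z) δ with hw | hw
  · exact (hbound hw).trans (le_add_of_nonneg_right (by positivity))
  · have hwz : w ≠ z := dist_pos.1 (hδ.trans_le hw)
    rw [dslope_of_ne _ hwz, slope_def_field, norm_div, div_eq_inv_mul, ← dist_eq_norm w z]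
    refine le_add_of_nonneg_of_le (by positivity) ?_
    simp only [Pi.sub_apply]
    gcongr

theorem norm_div_sub_le {δ : ℝ} (hδ : 0 < δ) (hg : ∀ w ∈ ball z δ, g w = 0) (w : ℂ) :
    ‖g w / (w - z)‖ ≤ ‖g w‖ / δ := by
  by_cases hw : w ∈ ball z δ
  · simp [hg w hw]
  · rw [norm_div, ← dist_eq_norm]
    gcongr
    simpa using hw

theorem integrable_div_sub_of_eq_zero {μ : Measure ℂ} (hg : Integrable g μ) {δ : ℝ} (hδ : 0 < δ)
    (hgz : ∀ w ∈ ball z δ, g w = 0) : Integrable (fun w => g w / (w - z)) μ :=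
  (hg.norm.div_const δ).mono' (hg.aestronglyMeasurable.div₀ (by fun_prop))
    (.of_forall (norm_div_sub_le hδ hgz))

theorem differentiableOn_integral_div_sub {μ : Measure ℂ} (hg : Integrable g μ) (hS : IsOpen S)
    (hgS : ∀ w ∈ S, g w = 0) : DifferentiableOn ℂ (fun z => ∫ w, g w / (w - z) ∂μ) S := by
  intro z hz
  obtain ⟨δ, hδ, hδS⟩ := Metric.isOpen_iff.1 hS z hz
  have hball {x : ℂ} (hx : x ∈ ball z (δ / 2)) : ∀ w ∈ ball x (δ / 2), g w = 0 := fun w hw =>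
    hgS w (hδS ((dist_triangle w x z).trans_lt (by linarith [mem_ball.1 hx, mem_ball.1 hw])))
  refine (hasDerivAt_integral_of_dominated_loc_of_deriv_le (F := fun z w => g w / (w - z))
    (F' := fun z w => g w / (w - z) / (w - z)) (bound := fun w => ‖g w‖ / (δ / 2) / (δ / 2))
    (ball_mem_nhds z (half_pos hδ))
    (.of_forall fun x => hg.aestronglyMeasurable.div₀ (by fun_prop))
    (integrable_div_sub_of_eq_zero hg (half_pos hδ) (hball (mem_ball_self (half_pos hδ))))
    ((hg.aestronglyMeasurable.div₀ (by fun_prop)).div₀ (by fun_prop))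
    (.of_forall fun w x hx => ?_) ((hg.norm.div_const _).div_const _)
    (.of_forall fun w x hx => ?_)).2.differentiableAt.differentiableWithinAt
  · refine (norm_div_sub_le (g := fun w => g w / (w - x)) (half_pos hδ)
      (fun w hw => by simp only [hball hx w hw, zero_div]) w).trans ?_
    gcongr
    exact norm_div_sub_le (half_pos hδ) (hball hx) w
  · rcases eq_or_ne w x with rfl | hwx
    · simpa [hball hx w (mem_ball_self (half_pos hδ))] using hasDerivAt_const w (0 : ℂ)
    · convert! (hasDerivAt_const x (g w)).div ((hasDerivAt_id x).const_sub w)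
        (sub_ne_zero.2 hwx) using 1
      rw [id, zero_mul, zero_sub, mul_neg_one, neg_neg, div_div, sq]

/-- If `η = 1` near `z`, Cauchy–Pompeiu reads `∫ ∂̄η(w) / (w - z) = -π`, while
`∫ ∂̄η(w) (f(w) - f(z)) / (w - z) = 0` because the singularity of the divided difference at `z` is
removable; the Cauchy transform of `f ∂̄η` is therefore `-π f`. -/
theorem HasZeroCapacityIn.integral_dbar_mul_div_sub (hE : HasZeroCapacityIn E Ω)
    (hΩE : IsOpen (Ω \ E)) (hΩ : volume (Ω \ E) ≠ ⊤) (hη : ContDiff ℝ 1 η)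
    (hηc : HasCompactSupport η) (hηΩ : tsupport η ⊆ Ω) (hS : IsOpen S) (hηS : ∀ w ∈ S, η w = 1)
    (hf : DifferentiableOn ℂ f (Ω \ E)) (hf2 : MemLp f 2 (volume.restrict (Ω \ E)))
    (hz : z ∈ S \ E) :
    ∫ w in Ω \ E, dbar η w * f w / (w - z) = -π * f z := by
  have : IsFiniteMeasure (volume.restrict (Ω \ E)) := ⟨by simpa using hΩ.lt_top⟩
  obtain ⟨δ, hδ, hδS⟩ := Metric.isOpen_iff.1 hS z hz.1
  have hdbar : ∀ w ∈ S, dbar η w = 0 := fun w hw => by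
    rw [dbar_congr (eventuallyEq_of_mem (hS.mem_nhds hw) hηS)]
    simp [dbar]
  have hzΩ : z ∈ Ω \ E :=
    ⟨hηΩ (subset_tsupport η (by simp [hηS z hz.1])), hz.2⟩
  have hdslope := memLp_dslope hΩE hΩ hf hf2 hzΩ
  have hpair := hE.integral_dbar_mul_eq_zero hΩE hη hηc hηΩ
    ((differentiableOn_dslope (hΩE.mem_nhds hzΩ)).2 hf) (hdslope.integrable one_le_two) hdslope
  have hPompeiu : ∫ w in Ω \ E, dbar η w / (w - z) = -π := by
    rw [← sdiff_inter_self_eq_sdiff,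
      setIntegral_congr_set (sdiff_null_ae_eq_self hE.measure_inter_eq_zero),
      setIntegral_eq_integral_of_forall_compl_eq_zero fun w hw => by
        rw [dbar_eq_zero_of_notMem_tsupport fun h => hw (hηΩ h), zero_div],
      integral_dbar_div_sub hη hηc, hηS z hz.1, mul_one]
  have hsplit (w : ℂ) : dbar η w * dslope f z w =
      dbar η w * f w / (w - z) - dbar η w / (w - z) * f z := by
    rcases eq_or_ne w z with rfl | hwz
    · simp [hdbar w hz.1]
    · rw [dslope_of_ne _ hwz, slope_def_field]
      ring
  simp_rw [hsplit] at hpair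
  rw [integral_sub, integral_mul_const, hPompeiu] at hpair
  · exact sub_eq_zero.1 hpair
  · exact integrable_div_sub_of_eq_zero (integrable_dbar_mul hη hηc (hf2.integrable one_le_two)) hδ
      fun w hw => by simp [hdbar w (hδS hw)]
  · exact (integrable_div_sub (continuous_dbar hη)
      (hasCompactSupport_dbar hηc) z).integrableOn.mul_const _

theorem HasZeroCapacityIn.exists_differentiableOn_eqOn {p : ℂ} {r : ℝ}
    (hE : HasZeroCapacityIn E (ball p r)) (hr : 0 < r) (hB : IsOpen (ball p r \ E))
    (hf : DifferentiableOn ℂ f (ball p r \ E))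
    (hf2 : MemLp f 2 (volume.restrict (ball p r \ E))) :
    ∃ G : ℂ → ℂ, DifferentiableOn ℂ G (ball p (r / 2)) ∧ EqOn G f (ball p (r / 2) \ E) := by
  let ρ : ContDiffBump p := ⟨r / 2, 3 * r / 4, by linarith, by linarith⟩
  set η : ℂ → ℂ := fun w => ρ w with hη_def
  have hη : ContDiff ℝ 1 η := ofRealCLM.contDiff.comp ρ.contDiff
  have hηc : HasCompactSupport η := ρ.hasCompactSupport.comp_left ofReal_zero
  have hηB : tsupport η ⊆ ball p r :=
    (tsupport_comp_subset ofReal_zero ρ).trans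
      (ρ.tsupport_eq.trans_subset (closedBall_subset_ball (by simp only [ρ]; linarith)))
  have hη1 : ∀ w ∈ ball p (r / 2), η w = 1 := fun w hw => by
    simp [hη_def, ρ.one_of_mem_closedBall (ball_subset_closedBall hw)]
  have hvol : volume (ball p r \ E) ≠ ⊤ :=
    measure_ne_top_of_subset sdiff_subset measure_ball_lt_top.ne
  have : IsFiniteMeasure (volume.restrict (ball p r \ E)) := ⟨by simpa using hvol.lt_top⟩
  refine ⟨fun z => (-(π : ℂ))⁻¹ * ∫ w in ball p r \ E, dbar η w * f w / (w - z), ?_, fun z hz => ?_⟩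
  · refine (differentiableOn_integral_div_sub
      (integrable_dbar_mul hη hηc (hf2.integrable one_le_two))
      isOpen_ball fun w hw => ?_).const_mul _
    rw [dbar_congr (eventuallyEq_of_mem (isOpen_ball.mem_nhds hw) hη1)]
    simp [dbar]
  · simp only [hE.integral_dbar_mul_div_sub hB hvol hη hηc hηB isOpen_ball hη1 hf hf2 hz]
    rw [inv_mul_cancel_left₀ (neg_ne_zero.2 (ofReal_ne_zero.2 pi_ne_zero))]

end Removability

section Laplacian

theorem isLittleO_taylor_two {E F : Type*} [NormedAddCommGroup E] [NormedSpace ℝ E]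
    [NormedAddCommGroup F] [NormedSpace ℝ F] {f : E → F} (hf : ContDiff ℝ 2 f) (x : E) :
    (fun y => f (x + y) - f x - (fderiv ℝ f x y + (2⁻¹ : ℝ) • fderiv ℝ (fderiv ℝ f) x y y))
      =o[𝓝 0] fun y => ‖y‖ ^ 2 := by
  set L := fderiv ℝ (fderiv ℝ f) x
  have hsymm (v w : E) : L v w = L w v := hf.contDiffAt.isSymmSndFDerivAt (by simp) v w
  have hremainder (y : E) : HasFDerivAt
      (fun y => f (x + y) - f x - (fderiv ℝ f x y + (2⁻¹ : ℝ) • L y y))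
      (fderiv ℝ f (x + y) - fderiv ℝ f x - L y) y := by
    have hf' := (hf.differentiable two_ne_zero (x + y)).hasFDerivAt.comp y
      ((hasFDerivAt_id y).const_add x)
    have hL := (L.hasFDerivAt (x := y)).clm_apply (hasFDerivAt_id y)
    refine ((hf'.sub_const (f x)).sub
      ((fderiv ℝ f x).hasFDerivAt.add (hL.const_smul (2⁻¹ : ℝ)))).congr_fderiv ?_
    ext v
    have hhalf : (2⁻¹ : ℝ) • L y v + (2⁻¹ : ℝ) • L y v = L y v := by
      rw [← add_smul, show (2⁻¹ : ℝ) + 2⁻¹ = 1 by norm_num, one_smul]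
    simp [hsymm v y, hhalf, sub_sub]
  have hfderiv : HasFDerivAt (fderiv ℝ f) L x :=
    ((hf.fderiv_right (m := 1) le_rfl).differentiable one_ne_zero x).hasFDerivAt
  refine Asymptotics.isLittleO_iff.2 fun ε hε => ?_
  obtain ⟨δ, hδ, hbound⟩ := Metric.eventually_nhds_iff_ball.1
    ((hasFDerivAt_iff_isLittleO_nhds_zero.1 hfderiv).def hε)
  filter_upwards [ball_mem_nhds 0 hδ] with y hy
  have hmvt := (convex_closedBall (0 : E) ‖y‖).norm_image_sub_le_of_norm_hasFDerivWithin_le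
    (fun v _ => (hremainder v).hasFDerivWithinAt) (C := ε * ‖y‖) (fun v hv => ?_)
    (mem_closedBall_self (norm_nonneg y)) (by simp : y ∈ closedBall 0 ‖y‖)
  · simpa [mul_assoc, sq] using hmvt
  · have hv' := mem_closedBall_zero_iff.1 hv
    refine (hbound v (mem_ball_zero_iff.2 (hv'.trans_lt (mem_ball_zero_iff.1 hy)))).trans ?_
    gcongr

theorem exists_add_smul_bilin_eq_re_add (l : ℂ →L[ℝ] ℝ) (L : ℂ →L[ℝ] ℂ →L[ℝ] ℝ) :
    ∃ a b : ℂ, ∀ y, l y + (2⁻¹ : ℝ) • L y y =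
      (a * y + b * y ^ 2).re + (L 1 1 + L I I) / 4 * ‖y‖ ^ 2 := by
  refine ⟨l 1 - l I * I, (L 1 1 - L I I) / 4 - (L 1 I + L I 1) / 4 * I, fun y => ?_⟩
  have hy : y = y.re • (1 : ℂ) + y.im • I := by simp
  have hl : l y = y.re * l 1 + y.im * l I := by
    conv_lhs => rw [hy]
    simp only [map_add, map_smul, smul_eq_mul]
  have hL : L y y = y.re ^ 2 * L 1 1 + y.re * y.im * (L 1 I + L I 1) + y.im ^ 2 * L I I := by
    conv_lhs => rw [hy]
    simp only [map_add, map_smul, add_apply, smul_apply, smul_eq_mul]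
    ring
  rw [hl, hL, Complex.sq_norm, normSq_apply]
  simp [sq]
  ring

variable {f : ℂ → ℝ}

theorem laplacian_eq_fderiv_fderiv (f : ℂ → ℝ) (z : ℂ) :
    Δ f z = fderiv ℝ (fderiv ℝ f) z 1 1 + fderiv ℝ (fderiv ℝ f) z I I := by
  simp [laplacian_eq_iteratedFDeriv_complexPlane, iteratedFDeriv_two_apply]

theorem circleIntegrable_of_continuous {E : Type*} [NormedAddCommGroup E] {g : ℂ → E}
    (hg : Continuous g) {c : ℂ} {R : ℝ} : CircleIntegrable g c R :=
  hg.continuousOn.circleIntegrable'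

theorem circleAverage_re_add_mul_norm_sq (a b c : ℂ) (k R : ℝ) :
    circleAverage (fun z => (a * (z - c) + b * (z - c) ^ 2).re + k * ‖z - c‖ ^ 2) c R =
      k * R ^ 2 := by
  have hholo : DiffContOnCl ℂ (fun z => a * (z - c) + b * (z - c) ^ 2) (ball c |R|) :=
    Differentiable.diffContOnCl (by fun_prop)
  have hharm : circleAverage (fun z => (a * (z - c) + b * (z - c) ^ 2).re) c R = 0 := by
    refine (reCLM.circleAverage_comp_comm (f := fun z => a * (z - c) + b * (z - c) ^ 2)
      (circleIntegrable_of_continuous (by fun_prop))).trans ?_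
    simp [hholo.circleAverage]
  have hnorm : circleAverage (fun z => k * ‖z - c‖ ^ 2) c R = k * R ^ 2 :=
    circleAverage_const_on_circle fun z hz => by
      rw [← dist_eq_norm, mem_sphere.1 hz, sq_abs]
  rw [circleAverage_fun_add (circleIntegrable_of_continuous (by fun_prop))
    (circleIntegrable_of_continuous (by fun_prop)), hharm, hnorm, zero_add]

theorem isLittleO_circleAverage_sub (hf : ContDiff ℝ 2 f) (c : ℂ) :
    (fun R => circleAverage f c R - f c - Δ f c / 4 * R ^ 2) =o[𝓝 0] fun R => R ^ 2 := by
  obtain ⟨a, b, hab⟩ := exists_add_smul_bilin_eq_re_add (fderiv ℝ f c) (fderiv ℝ (fderiv ℝ f) c)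
  rw [← laplacian_eq_fderiv_fderiv] at hab
  set q : ℂ → ℝ := fun z => (a * (z - c) + b * (z - c) ^ 2).re + Δ f c / 4 * ‖z - c‖ ^ 2
  have hq : Continuous q := by fun_prop
  have hfc := hf.continuous
  have haverage (R : ℝ) : circleAverage f c R - f c - Δ f c / 4 * R ^ 2 =
      circleAverage (fun z => f z - f c - q z) c R := by
    rw [circleAverage_fun_sub (circleIntegrable_of_continuous (by fun_prop))
      (circleIntegrable_of_continuous hq), circleAverage_fun_sub
      (circleIntegrable_of_continuous (by fun_prop)) (circleIntegrable_of_continuous (by fun_prop)),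
      circleAverage_const, circleAverage_re_add_mul_norm_sq]
  refine Asymptotics.isLittleO_iff.2 fun ε hε => ?_
  obtain ⟨δ, hδ, hbound⟩ := Metric.eventually_nhds_iff_ball.1 ((isLittleO_taylor_two hf c).def hε)
  filter_upwards [ball_mem_nhds 0 hδ] with R hR
  rw [haverage, Real.norm_eq_abs]
  refine (abs_circleAverage_le_circleAverage_abs).trans
    (circleAverage_mono_on_of_le_circle
      (circleIntegrable_of_continuous (g := fun z => f z - f c - q z) (by fun_prop)).abs
      fun z hz => ?_)
  have hzR : ‖z - c‖ = |R| := by rw [← dist_eq_norm, mem_sphere.1 hz]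
  have h := hbound (z - c) (by simpa [hzR] using hR)
  rw [hab, add_sub_cancel] at h
  rw [hzR, sq_abs] at h
  simpa only [Pi.abs_apply, q, Real.norm_eq_abs, hzR, sq_abs] using h

theorem laplacian_nonpos_of_circleAverage_le (hf : ContDiff ℝ 2 f) {c : ℂ}
    (h : ∀ᶠ R in 𝓝[>] 0, circleAverage f c R ≤ f c) : Δ f c ≤ 0 := by
  have hlim := (isLittleO_circleAverage_sub hf c).tendsto_div_nhds_zero.mono_left
    (nhdsWithin_le_nhds (s := Ioi 0))
  have hle : 0 ≤ -(Δ f c / 4) := by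
    refine le_of_tendsto hlim ?_
    filter_upwards [h, self_mem_nhdsWithin] with R hR hR0
    have : 0 < R ^ 2 := pow_pos hR0 2
    rw [div_le_iff₀ this]
    linarith
  linarith

end Laplacian

section SuperMeanValue

open scoped Convolution

open ContinuousLinearMap (mul)

/-- The mean-value inequality of superharmonic functions, on the closed discs contained in `Ω`.
No regularity is required, so that it can be shared by truncations and their mollifications. -/
def SuperMeanValueOn (v : ℂ → ℝ) (Ω : Set ℂ) : Prop :=
  ∀ ⦃c : ℂ⦄ ⦃R : ℝ⦄, 0 < R → closedBall c R ⊆ Ω → circleAverage v c R ≤ v c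

variable {α : Type*} [MeasurableSpace α] {ν : Measure α} [IsFiniteMeasure ν]
  {ρ v w : ℂ → ℝ} {Ω : Set ℂ} {p x : ℂ} {r L a : ℝ}

theorem SuperMeanValueOn.laplacian_nonpos (hv : SuperMeanValueOn v Ω) (hΩ : IsOpen Ω)
    (hvC : ContDiff ℝ 2 v) (hx : x ∈ Ω) : Δ v x ≤ 0 := by
  refine laplacian_nonpos_of_circleAverage_le hvC ?_
  obtain ⟨δ, hδ, hball⟩ := Metric.isOpen_iff.1 hΩ x hx
  filter_upwards [Ioo_mem_nhdsGT hδ] with R hR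
  exact hv hR.1 ((closedBall_subset_ball hR.2).trans hball)

theorem sub_mem_ball_add {y : ℂ} {ε : ℝ} (hx : x ∈ ball p r) (hy : y ∈ ball 0 ε) :
    x - y ∈ ball p (r + ε) := by
  rw [mem_ball, dist_eq_norm] at *
  calc ‖x - y - p‖ = ‖x - p - (y - 0)‖ := by congr 1; ring
    _ ≤ ‖x - p‖ + ‖y - 0‖ := norm_sub_le _ _
    _ < r + ε := add_lt_add hx hy

theorem integrable_mul_comp_sub (hρ : Integrable ρ) (hv : Measurable v) (hL : ∀ z, ‖v z‖ ≤ L)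
    (x : ℂ) : Integrable fun y => ρ y * v (x - y) :=
  hρ.mul_bdd (c := L) (hv.comp (measurable_const.sub measurable_id)).aestronglyMeasurable
    (.of_forall fun _ => hL _)

theorem integral_convolution_comp (hρ : Integrable ρ) (hv : Measurable v) (hL : ∀ z, ‖v z‖ ≤ L)
    {g : α → ℂ} (hg : Measurable g) :
    ∫ t, (ρ ⋆[mul ℝ ℝ] v) (g t) ∂ν = ∫ y, ρ y * ∫ t, v (g t - y) ∂ν := by
  simp only [convolution, ContinuousLinearMap.mul_apply', ← integral_const_mul]
  refine integral_integral_swap ((hρ.comp_snd ν).mul_bdd (c := L) ?_ (.of_forall fun _ => hL _))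
  exact (hv.comp ((hg.comp measurable_fst).sub measurable_snd)).aestronglyMeasurable

theorem circleAverage_convolution (hρ : Integrable ρ) (hv : Measurable v) (hL : ∀ z, ‖v z‖ ≤ L)
    (c : ℂ) (R : ℝ) :
    circleAverage (ρ ⋆[mul ℝ ℝ] v) c R = ∫ y, ρ y * circleAverage v (c - y) R := by
  have hshift (y : ℂ) (θ : ℝ) : circleMap (c - y) R θ = circleMap c R θ - y := by
    simp only [circleMap]; ring
  simp only [circleAverage_def, intervalIntegral.integral_of_le two_pi_pos.le, hshift,
    integral_convolution_comp hρ hv hL (continuous_circleMap c R).measurable, smul_eq_mul]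
  rw [← integral_const_mul]
  simp only [mul_left_comm]

section Mollifier

variable (φ : ContDiffBump (0 : ℂ)) (hv : Measurable v) (h0 : ∀ z, 0 ≤ v z) (hL : ∀ z, v z ≤ L)

theorem normed_eq_zero_of_notMem_ball (hx : x ∉ ball 0 φ.rOut) : φ.normed volume x = 0 := by
  rwa [← Function.notMem_support, φ.support_normed_eq]

theorem integral_normed_mul_const (a : ℝ) : ∫ y, φ.normed volume y * a = a := by
  rw [integral_mul_const, φ.integral_normed, one_mul]

theorem integral_normed_mul_mono {f g : ℂ → ℝ} (hf : ∀ y, 0 ≤ f y)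
    (hg : Integrable fun y => φ.normed volume y * g y) (hfg : ∀ y ∈ ball 0 φ.rOut, f y ≤ g y) :
    ∫ y, φ.normed volume y * f y ≤ ∫ y, φ.normed volume y * g y := by
  refine integral_mono_of_nonneg (.of_forall fun y => mul_nonneg (φ.nonneg_normed y) (hf y)) hg
    (.of_forall fun y => ?_)
  by_cases hy : y ∈ ball 0 φ.rOut
  · exact mul_le_mul_of_nonneg_left (hfg y hy) (φ.nonneg_normed y)
  · simp [normed_eq_zero_of_notMem_ball φ hy]

include hv h0 hL

theorem contDiff_normed_convolution : ContDiff ℝ 2 (φ.normed volume ⋆[mul ℝ ℝ] v) := by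
  refine φ.hasCompactSupport_normed.contDiff_convolution_left _ φ.contDiff_normed
    ((locallyIntegrable_const L).mono hv.aestronglyMeasurable (.of_forall fun z => ?_))
  rw [Real.norm_of_nonneg (h0 z)]
  exact (hL z).trans (le_abs_self L)

theorem le_normed_convolution (ha : 0 ≤ a) (hx : ∀ z ∈ ball x φ.rOut, a ≤ v z) :
    a ≤ (φ.normed volume ⋆[mul ℝ ℝ] v) x := by
  conv_lhs => rw [← integral_normed_mul_const φ a]
  exact integral_normed_mul_mono φ (fun _ => ha)
    (integrable_mul_comp_sub φ.integrable_normed hv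
      (fun z => (Real.norm_of_nonneg (h0 z)).trans_le (hL z)) x)
    fun y hy => hx _ (by simpa [dist_eq_norm] using hy)

theorem SuperMeanValueOn.normed_convolution (hsmv : SuperMeanValueOn v (ball p (r + φ.rOut))) :
    SuperMeanValueOn (φ.normed volume ⋆[mul ℝ ℝ] v) (ball p r) := by
  intro c R hR hball
  have hnorm (z : ℂ) : ‖v z‖ ≤ L := (Real.norm_of_nonneg (h0 z)).trans_le (hL z)
  rw [circleAverage_convolution φ.integrable_normed hv hnorm]
  refine integral_normed_mul_mono φ (fun y => circleAverage_nonneg_of_nonneg fun z _ => h0 z)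
    (integrable_mul_comp_sub φ.integrable_normed hv hnorm c) fun y hy => hsmv hR fun z hz => ?_
  have hzy : z + y ∈ ball p r := hball (by simpa [dist_eq_norm, sub_sub_eq_add_sub] using hz)
  simpa using sub_mem_ball_add hzy hy

theorem setIntegral_ball_normed_convolution_le :
    ∫ x in ball p r, (φ.normed volume ⋆[mul ℝ ℝ] v) x ≤ ∫ x in ball p (r + φ.rOut), v x := by
  have hint : IntegrableOn v (ball p (r + φ.rOut)) :=
    Measure.integrableOn_of_bounded measure_ball_lt_top.ne hv.aestronglyMeasurable
      (.of_forall fun z => (Real.norm_of_nonneg (h0 z)).trans_le (hL z))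
  have htranslate (y : ℂ) (hy : y ∈ ball 0 φ.rOut) :
      ∫ x in ball p r, v (x - y) ≤ ∫ x in ball p (r + φ.rOut), v x := by
    have hsub : ball p r ⊆ (· - y) ⁻¹' ball p (r + φ.rOut) := fun x hx => sub_mem_ball_add hx hy
    have hpres := measurePreserving_sub_right (volume : Measure ℂ) y
    have hemb := MeasurableEquiv.subRight y |>.measurableEmbedding
    rw [← hpres.setIntegral_preimage_emb hemb v]
    exact setIntegral_mono_set ((hpres.integrableOn_comp_preimage hemb).2 hint)
      (.of_forall fun x => h0 _) hsub.eventuallyLE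
  have : IsFiniteMeasure (volume.restrict (ball p r)) :=
    isFiniteMeasure_restrict.2 measure_ball_lt_top.ne
  rw [integral_convolution_comp (g := fun x => x) φ.integrable_normed hv
    (fun z => (Real.norm_of_nonneg (h0 z)).trans_le (hL z)) measurable_id,
    ← integral_normed_mul_const φ (∫ x in ball p (r + φ.rOut), v x)]
  exact integral_normed_mul_mono φ (fun y => integral_nonneg fun x => h0 _)
    (φ.integrable_normed.mul_const _) htranslate

end Mollifier

end SuperMeanValue

section Energy

variable {w ψ η : ℂ → ℝ} {p x e : ℂ} {r R : ℝ}

/-- The squared norm `(∂f/∂x)² + (∂f/∂y)²` of the gradient of `f : ℂ → ℝ`. -/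
noncomputable def gradSq (f : ℂ → ℝ) (z : ℂ) : ℝ :=
  fderiv ℝ f z 1 ^ 2 + fderiv ℝ f z I ^ 2

theorem gradSq_nonneg (f : ℂ → ℝ) (z : ℂ) : 0 ≤ gradSq f z := by
  unfold gradSq; positivity

theorem norm_fderiv_sq_le_gradSq (f : ℂ → ℝ) (z : ℂ) : ‖fderiv ℝ f z‖ ^ 2 ≤ gradSq f z := by
  refine (Real.le_sqrt (norm_nonneg _) (gradSq_nonneg f z)).1
    (ContinuousLinearMap.opNorm_le_bound _ (Real.sqrt_nonneg _) fun v => ?_)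
  have hv : fderiv ℝ f z v = v.re * fderiv ℝ f z 1 + v.im * fderiv ℝ f z I := by
    conv_lhs => rw [show v = v.re • (1 : ℂ) + v.im • I by simp]
    simp only [map_add, map_smul, smul_eq_mul]
  rw [← Real.sqrt_sq (norm_nonneg v), ← Real.sqrt_mul (gradSq_nonneg f z), hv, Real.norm_eq_abs,
    Complex.sq_norm, normSq_apply, gradSq]
  refine Real.abs_le_sqrt ?_
  nlinarith [sq_nonneg (v.re * fderiv ℝ f z I - v.im * fderiv ℝ f z 1)]

theorem continuous_fderiv_apply_const (hψ : ContDiff ℝ 1 ψ) (e : ℂ) :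
    Continuous fun z => fderiv ℝ ψ z e :=
  (hψ.continuous_fderiv one_ne_zero).clm_apply continuous_const

theorem continuous_gradSq (hψ : ContDiff ℝ 1 ψ) : Continuous (gradSq ψ) :=
  ((continuous_fderiv_apply_const hψ 1).pow 2).add ((continuous_fderiv_apply_const hψ I).pow 2)

theorem continuous_fderiv_fderiv_apply_const (hψ : ContDiff ℝ 2 ψ) (e : ℂ) :
    Continuous fun z => fderiv ℝ (fderiv ℝ ψ) z e e :=
  (((hψ.fderiv_right (m := 1) le_rfl).continuous_fderiv one_ne_zero).clm_apply
    continuous_const).clm_apply continuous_const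

theorem continuous_laplacian (hψ : ContDiff ℝ 2 ψ) : Continuous (Δ ψ) := by
  rw [funext (laplacian_eq_fderiv_fderiv ψ)]
  exact (continuous_fderiv_fderiv_apply_const hψ 1).add
    (continuous_fderiv_fderiv_apply_const hψ I)

theorem hasFDerivAt_fderiv_apply_const (hψ : ContDiff ℝ 2 ψ) (z e : ℂ) :
    HasFDerivAt (fun y => fderiv ℝ ψ y e) ((fderiv ℝ (fderiv ℝ ψ) z).flip e) z := by
  have h := ((hψ.fderiv_right (m := 1) le_rfl).differentiable one_ne_zero z).hasFDerivAt
  exact (h.clm_apply (hasFDerivAt_const e z)).congr_fderiv (by simp)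

theorem fderiv_log_apply (hw : ContDiff ℝ 1 w) (hw0 : ∀ z, w z ≠ 0) (z e : ℂ) :
    fderiv ℝ (fun y => Real.log (w y)) z e = fderiv ℝ w z e / w z := by
  rw [fderiv.log (hw.differentiable one_ne_zero z) (hw0 z), smul_apply, smul_eq_mul,
    inv_mul_eq_div]

theorem fderiv_fderiv_log_apply (hw : ContDiff ℝ 2 w) (hw0 : ∀ z, w z ≠ 0) (z e : ℂ) :
    fderiv ℝ (fderiv ℝ fun y => Real.log (w y)) z e e =
      fderiv ℝ (fderiv ℝ w) z e e / w z - fderiv ℝ (fun y => Real.log (w y)) z e ^ 2 := by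
  have hmul (y : ℂ) : fderiv ℝ w y e = w y * fderiv ℝ (fun y => Real.log (w y)) y e := by
    rw [fderiv_log_apply (hw.of_le one_le_two) hw0, mul_div_cancel₀ _ (hw0 y)]
  have hleft := hasFDerivAt_fderiv_apply_const hw z e
  have hright := (hw.differentiable two_ne_zero z).hasFDerivAt.mul
    (hasFDerivAt_fderiv_apply_const (hw.log hw0) z e)
  rw [funext hmul] at hleft
  have heq := DFunLike.congr_fun (hleft.unique hright) e
  simp only [add_apply, smul_apply, ContinuousLinearMap.flip_apply, smul_eq_mul, hmul z] at heq
  rw [heq]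
  field_simp [hw0 z]
  ring

theorem laplacian_log (hw : ContDiff ℝ 2 w) (hw0 : ∀ z, w z ≠ 0) (z : ℂ) :
    Δ (fun y => Real.log (w y)) z = Δ w z / w z - gradSq (fun y => Real.log (w y)) z := by
  rw [laplacian_eq_fderiv_fderiv, laplacian_eq_fderiv_fderiv, fderiv_fderiv_log_apply hw hw0,
    fderiv_fderiv_log_apply hw hw0, gradSq]
  ring

theorem integrable_sq_mul (hη : Continuous η) (hηc : HasCompactSupport η) {g : ℂ → ℝ}
    (hg : Continuous g) : Integrable fun z => η z ^ 2 * g z :=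
  ((hη.pow 2).mul hg).integrable_of_hasCompactSupport
    (.intro hηc fun z hz => by simp [image_eq_zero_of_notMem_tsupport hz])

theorem integrable_gradSq (hη : ContDiff ℝ 1 η) (hηc : HasCompactSupport η) :
    Integrable (gradSq η) :=
  (continuous_gradSq hη).integrable_of_hasCompactSupport <| .intro hηc fun z hz => by
    simp [gradSq, fderiv_of_notMem_tsupport (𝕜 := ℝ) hz]

theorem integrable_mul_fderiv_mul_fderiv (hη : ContDiff ℝ 1 η) (hηc : HasCompactSupport η)
    (hψ : ContDiff ℝ 1 ψ) (e : ℂ) :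
    Integrable fun z => 2 * η z * fderiv ℝ η z e * fderiv ℝ ψ z e :=
  (((continuous_const.mul hη.continuous).mul (continuous_fderiv_apply_const hη e)).mul
    (continuous_fderiv_apply_const hψ e)).integrable_of_hasCompactSupport
    (.intro hηc fun z hz => by simp [image_eq_zero_of_notMem_tsupport hz])

theorem integral_sq_mul_fderiv_fderiv (hη : ContDiff ℝ 1 η) (hηc : HasCompactSupport η)
    (hψ : ContDiff ℝ 2 ψ) (e : ℂ) :
    ∫ z, η z ^ 2 * fderiv ℝ (fderiv ℝ ψ) z e e =
      -∫ z, 2 * η z * fderiv ℝ η z e * fderiv ℝ ψ z e := by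
  have hψ1 := hψ.of_le one_le_two
  have hsq (z : ℂ) : fderiv ℝ (fun y => η y ^ 2) z e = 2 * η z * fderiv ℝ η z e := by
    rw [fderiv_fun_pow 2 (hη.differentiable one_ne_zero z)]
    simp
  have hψ2 (z : ℂ) : fderiv ℝ (fun y => fderiv ℝ ψ y e) z e = fderiv ℝ (fderiv ℝ ψ) z e e :=
    DFunLike.congr_fun (hasFDerivAt_fderiv_apply_const hψ z e).fderiv e
  have hibp := integral_mul_fderiv_eq_neg_fderiv_mul_of_integrable (μ := (volume : Measure ℂ))
    (f := fun z => η z ^ 2) (g := fun z => fderiv ℝ ψ z e) (v := e)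
    (by simpa only [hsq] using integrable_mul_fderiv_mul_fderiv hη hηc hψ1 e)
    (by simpa only [hψ2] using
      integrable_sq_mul hη.continuous hηc (continuous_fderiv_fderiv_apply_const hψ e))
    (integrable_sq_mul hη.continuous hηc (continuous_fderiv_apply_const hψ1 e))
    (fun z _ => (hη.differentiable one_ne_zero z).pow 2)
    (fun z _ => (hasFDerivAt_fderiv_apply_const hψ z e).differentiableAt)
  simpa only [hsq, hψ2] using hibp

theorem integral_sq_mul_laplacian (hη : ContDiff ℝ 1 η) (hηc : HasCompactSupport η)
    (hψ : ContDiff ℝ 2 ψ) :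
    ∫ z, η z ^ 2 * Δ ψ z =
      -∫ z, (2 * η z * fderiv ℝ η z 1 * fderiv ℝ ψ z 1 +
        2 * η z * fderiv ℝ η z I * fderiv ℝ ψ z I) := by
  have hint (e : ℂ) :=
    integrable_sq_mul hη.continuous hηc (continuous_fderiv_fderiv_apply_const hψ e)
  have hint' := integrable_mul_fderiv_mul_fderiv hη hηc (hψ.of_le one_le_two)
  simp only [laplacian_eq_fderiv_fderiv, mul_add]
  rw [integral_add (hint 1) (hint I), integral_add (hint' 1) (hint' I),
    integral_sq_mul_fderiv_fderiv hη hηc hψ, integral_sq_mul_fderiv_fderiv hη hηc hψ, neg_add]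

theorem integral_sq_mul_gradSq_le (hη : ContDiff ℝ 1 η) (hηc : HasCompactSupport η)
    (hψ : ContDiff ℝ 2 ψ) (hΔ : ∀ z ∈ tsupport η, Δ ψ z ≤ -gradSq ψ z) :
    ∫ z, η z ^ 2 * gradSq ψ z ≤ 4 * ∫ z, gradSq η z := by
  have hψ1 := hψ.of_le one_le_two
  have hη' := integrable_gradSq hη hηc
  have hψ' := integrable_sq_mul hη.continuous hηc (continuous_gradSq hψ1)
  have hψΔ := integrable_sq_mul hη.continuous hηc (continuous_laplacian hψ)
  have hΔ' (z : ℂ) : η z ^ 2 * gradSq ψ z ≤ -(η z ^ 2 * Δ ψ z) := by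
    by_cases hz : z ∈ tsupport η
    · nlinarith [hΔ z hz, sq_nonneg (η z)]
    · simp [image_eq_zero_of_notMem_tsupport hz]
  have habsorb : ∫ z, η z ^ 2 * gradSq ψ z ≤
      (2⁻¹ * ∫ z, η z ^ 2 * gradSq ψ z) + 2 * ∫ z, gradSq η z := by
    calc ∫ z, η z ^ 2 * gradSq ψ z
        ≤ -∫ z, η z ^ 2 * Δ ψ z := by
          rw [← integral_neg]
          exact integral_mono hψ' hψΔ.neg hΔ'
      _ = ∫ z, (2 * η z * fderiv ℝ η z 1 * fderiv ℝ ψ z 1 +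
            2 * η z * fderiv ℝ η z I * fderiv ℝ ψ z I) := by
          rw [integral_sq_mul_laplacian hη hηc hψ, neg_neg]
      _ ≤ ∫ z, (2⁻¹ * (η z ^ 2 * gradSq ψ z) + 2 * gradSq η z) := by
          refine integral_mono ((integrable_mul_fderiv_mul_fderiv hη hηc hψ1 1).add
            (integrable_mul_fderiv_mul_fderiv hη hηc hψ1 I))
            ((hψ'.const_mul _).add (hη'.const_mul _)) fun z => ?_
          simp only [gradSq]
          nlinarith [sq_nonneg (η z * fderiv ℝ ψ z 1 - 2 * fderiv ℝ η z 1),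
            sq_nonneg (η z * fderiv ℝ ψ z I - 2 * fderiv ℝ η z I)]
      _ = (2⁻¹ * ∫ z, η z ^ 2 * gradSq ψ z) + 2 * ∫ z, gradSq η z := by
          rw [integral_add (hψ'.const_mul _) (hη'.const_mul _), integral_const_mul,
            integral_const_mul]
  linarith

theorem exists_setIntegral_ball_gradSq_log_le (p : ℂ) (hr : 0 < r) (hrR : r < R) :
    ∃ A : ℝ, ∀ w : ℂ → ℝ, ContDiff ℝ 2 w → (∀ z, 0 < w z) → (∀ z ∈ ball p R, Δ w z ≤ 0) →
      ∫ z in ball p r, gradSq (fun y => Real.log (w y)) z ≤ A := by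
  let η : ContDiffBump p := ⟨r, (r + R) / 2, hr, by linarith⟩
  refine ⟨4 * ∫ z, gradSq η z, fun w hw hw0 hΔ => ?_⟩
  have hψ : ContDiff ℝ 2 fun y => Real.log (w y) := hw.log fun z => (hw0 z).ne'
  have hηψ := integrable_sq_mul η.continuous η.hasCompactSupport
    (continuous_gradSq (hψ.of_le one_le_two))
  calc ∫ z in ball p r, gradSq (fun y => Real.log (w y)) z
      = ∫ z in ball p r, η z ^ 2 * gradSq (fun y => Real.log (w y)) z :=
        setIntegral_congr_fun measurableSet_ball fun z hz => by
          simp [η.one_of_mem_closedBall (ball_subset_closedBall hz)]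
    _ ≤ ∫ z, η z ^ 2 * gradSq (fun y => Real.log (w y)) z :=
        setIntegral_le_integral hηψ
          (.of_forall fun z => mul_nonneg (sq_nonneg _) (gradSq_nonneg _ z))
    _ ≤ 4 * ∫ z, gradSq η z := by
        refine integral_sq_mul_gradSq_le η.contDiff η.hasCompactSupport hψ fun z hz => ?_
        rw [laplacian_log hw fun z => (hw0 z).ne', η.tsupport_eq] at *
        have hzR : z ∈ ball p R := closedBall_subset_ball (by simp only [η]; linarith) hz
        linarith [div_nonpos_of_nonpos_of_nonneg (hΔ z hzR) (hw0 z).le]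

end Energy

section ZeroCapacity

variable {E Ω : Set ℂ} {v w : ℂ → ℝ} {p x : ℂ} {r R J : ℝ}

theorem exists_contDiff_cutoff : ∃ S : ℝ → ℝ, ∃ C : ℝ≥0, ContDiff ℝ 1 S ∧ S 0 = 0 ∧
    (∀ t, 1 ≤ t → S t = 1) ∧ LipschitzWith C S := by
  have hS : ContDiff ℝ 1 Real.smoothTransition := Real.smoothTransition.contDiff
  have hc : HasCompactSupport (fderiv ℝ Real.smoothTransition) := by
    refine .intro (isCompact_Icc (a := (0 : ℝ)) (b := 1)) fun t ht => ?_
    rw [mem_Icc, not_and_or, not_le, not_le] at ht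
    obtain ht | ht := ht
    · have h0 : Real.smoothTransition =ᶠ[𝓝 t] fun _ => 0 := by
        filter_upwards [Iio_mem_nhds ht] with y hy
        exact Real.smoothTransition.zero_of_nonpos (le_of_lt hy)
      simp [h0.fderiv_eq]
    · have h1 : Real.smoothTransition =ᶠ[𝓝 t] fun _ => 1 := by
        filter_upwards [Ioi_mem_nhds ht] with y hy
        exact Real.smoothTransition.one_of_one_le (le_of_lt hy)
      simp [h1.fderiv_eq]
  obtain ⟨C, hC⟩ := (hS.continuous_fderiv one_ne_zero).bounded_above_of_compact_support hc
  refine ⟨Real.smoothTransition, C.toNNReal, hS, Real.smoothTransition.zero,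
    fun t => Real.smoothTransition.one_of_one_le, ?_⟩
  exact lipschitzWith_of_nnnorm_fderiv_le (hS.differentiable one_ne_zero)
    fun t => NNReal.coe_le_coe.1 ((hC t).trans (Real.le_coe_toNNReal C))

theorem hasZeroCapacityIn_of_forall_exists_le {A : ℝ≥0} (h : ∀ M : ℝ, ∃ ψ : ℂ → ℝ,
      ContDiff ℝ 1 ψ ∧ (∀ᶠ z in 𝓝ˢ E, M ≤ ψ z) ∧ eLpNorm ψ 2 (volume.restrict Ω) ≤ A ∧
      eLpNorm (fderiv ℝ ψ) 2 (volume.restrict Ω) ≤ A) :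
    HasZeroCapacityIn E Ω := by
  intro ε hε
  obtain ⟨S, C, hS, hS0, hS1, hSC⟩ := exists_contDiff_cutoff
  obtain ⟨M, hM, hMε⟩ : ∃ M : ℝ≥0, 0 < M ∧ ((C / M : ℝ≥0) : ℝ≥0∞) * A ≤ ε := by
    obtain ⟨k, hk, hkε⟩ := ENNReal.exists_nnreal_pos_mul_lt
      (ENNReal.coe_ne_top (r := C * A)) hε.ne'
    refine ⟨k⁻¹, inv_pos.2 hk, ?_⟩
    rw [div_inv_eq_mul, mul_comm C, ← ENNReal.coe_mul, mul_assoc, ENNReal.coe_mul]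
    exact hkε.le
  obtain ⟨ψ, hψ, hψE, hψ2, hψ2'⟩ := h M
  refine ⟨fun z => S (ψ z / M), hS.comp (hψ.div_const _), ?_, ?_, ?_⟩
  · filter_upwards [hψE] with z hz
    exact hS1 _ ((one_le_div (NNReal.coe_pos.2 hM)).2 hz)
  · have hbound (z : ℂ) : ‖S (ψ z / M)‖ ≤ (C / M : ℝ≥0) * ‖ψ z‖ := by
      simpa [hS0, div_eq_mul_inv, mul_comm, mul_assoc, mul_left_comm] using
        hSC.dist_le_mul (ψ z / M) 0
    exact (eLpNorm_le_nnreal_smul_eLpNorm_of_ae_le_mul (.of_forall hbound) 2).trans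
      ((mul_le_mul_right hψ2 _).trans hMε)
  · have hbound (z : ℂ) : ‖fderiv ℝ (fun z => S (ψ z / M)) z‖ ≤
        (C / M : ℝ≥0) * ‖fderiv ℝ ψ z‖ := by
      have hcomp : HasFDerivAt (fun z => S (ψ z / M)) _ z :=
        (hS.differentiable one_ne_zero (ψ z / M)).hasFDerivAt.comp z
          ((hψ.differentiable one_ne_zero z).hasFDerivAt.mul_const (M : ℝ)⁻¹)
      rw [hcomp.fderiv]
      refine (ContinuousLinearMap.opNorm_comp_le _ _).trans ?_
      rw [norm_smul, norm_inv, NNReal.norm_eq, ← mul_assoc, ← div_eq_mul_inv,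
        NNReal.coe_div]
      gcongr
      exact norm_fderiv_le_of_lipschitz ℝ hSC
    exact (eLpNorm_le_nnreal_smul_eLpNorm_of_ae_le_mul (.of_forall hbound) 2).trans
      ((mul_le_mul_right hψ2' _).trans hMε)

theorem eLpNorm_two_le_of_integral_le {F : Type*} [NormedAddCommGroup F] {μ : Measure ℂ}
    {f : ℂ → F} {g : ℂ → ℝ} (hg : Integrable g μ)
    (hfg : ∀ z, ‖f z‖ ^ 2 ≤ g z) (hJ : ∫ z, g z ∂μ ≤ J) :
    eLpNorm f 2 μ ≤ NNReal.sqrt J.toNNReal := by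
  calc eLpNorm f 2 μ = (∫⁻ z, ‖f z‖ₑ ^ 2 ∂μ) ^ (2⁻¹ : ℝ) := by
        simp [eLpNorm_eq_lintegral_rpow_enorm_toReal]
    _ ≤ (∫⁻ z, ENNReal.ofReal (g z) ∂μ) ^ (2⁻¹ : ℝ) := by
        gcongr with z
        rw [← ofReal_norm, ← ENNReal.ofReal_pow (norm_nonneg _)]
        exact ENNReal.ofReal_le_ofReal (hfg z)
    _ ≤ ENNReal.ofReal J ^ (2⁻¹ : ℝ) := by
        rw [← ofReal_integral_eq_lintegral_ofReal hg
          (.of_forall fun z => (sq_nonneg _).trans (hfg z))]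
        gcongr
    _ = NNReal.sqrt J.toNNReal := by
        rw [NNReal.sqrt_eq_rpow, ENNReal.coe_rpow_of_nonneg _ (by norm_num), one_div,
          ENNReal.ofReal]

theorem exists_forall_eLpNorm_log_le (hr : 0 < r) (hrR : r < R) (p : ℂ) (J : ℝ) :
    ∃ A : ℝ≥0, ∀ w : ℂ → ℝ, ContDiff ℝ 2 w → (∀ z, 1 ≤ w z) → (∀ z ∈ ball p R, Δ w z ≤ 0) →
      ∫ z in ball p R, w z ≤ J →
      eLpNorm (fun z => Real.log (w z)) 2 (volume.restrict (ball p r)) ≤ A ∧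
      eLpNorm (fderiv ℝ fun z => Real.log (w z)) 2 (volume.restrict (ball p r)) ≤ A := by
  obtain ⟨B, hB⟩ := exists_setIntegral_ball_gradSq_log_le p hr hrR
  refine ⟨max (NNReal.sqrt (4 * J).toNNReal) (NNReal.sqrt B.toNNReal), fun w hw hw1 hΔ hJ => ?_⟩
  have hw0 (z : ℂ) : 0 < w z := zero_lt_one.trans_le (hw1 z)
  have hψ : ContDiff ℝ 2 fun z => Real.log (w z) := hw.log fun z => (hw0 z).ne'
  have hint {g : ℂ → ℝ} (hg : Continuous g) (s : ℝ) : IntegrableOn g (ball p s) :=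
    (hg.continuousOn.integrableOn_compact (isCompact_closedBall p s)).mono_set
      ball_subset_closedBall
  have hlog (z : ℂ) : ‖Real.log (w z)‖ ^ 2 ≤ 4 * w z := by
    have hle := Real.log_le_rpow_div (hw0 z).le (by norm_num : (0 : ℝ) < 1 / 2)
    rw [← Real.sqrt_eq_rpow] at hle
    rw [Real.norm_of_nonneg (Real.log_nonneg (hw1 z))]
    calc Real.log (w z) ^ 2 ≤ (√(w z) / (1 / 2)) ^ 2 :=
          pow_le_pow_left₀ (Real.log_nonneg (hw1 z)) hle 2
      _ = 4 * w z := by rw [div_pow, Real.sq_sqrt (hw0 z).le]; ring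
  rw [ENNReal.coe_max]
  constructor
  · refine (eLpNorm_two_le_of_integral_le ((hint hw.continuous r).const_mul 4) hlog ?_).trans
      (le_max_left _ _)
    rw [integral_const_mul]
    gcongr
    exact (setIntegral_mono_set (hint hw.continuous R) (.of_forall fun z => (hw0 z).le)
      (ball_subset_ball hrR.le).eventuallyLE).trans hJ
  · exact (eLpNorm_two_le_of_integral_le (hint (continuous_gradSq (hψ.of_le one_le_two)) r)
      (norm_fderiv_sq_le_gradSq _) (hB w hw hw0 hΔ)).trans (le_max_right _ _)

theorem SuperMeanValueOn.mono {Ω' : Set ℂ} (hv : SuperMeanValueOn v Ω) (h : Ω' ⊆ Ω) :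
    SuperMeanValueOn v Ω' :=
  fun _ _ hR hball => hv hR (hball.trans h)

theorem exists_pos_eventually_ball_subset (hE : IsCompact E) {O : Set ℂ} (hO : O ∈ 𝓝ˢ E) :
    ∃ δ > 0, ∀ᶠ z in 𝓝ˢ E, ball z δ ⊆ O := by
  obtain ⟨V, hV, hEV, hVO⟩ := mem_nhdsSet_iff_exists.1 hO
  obtain ⟨δ, hδ, hδV⟩ := hE.exists_thickening_subset_open hV hEV
  refine ⟨δ / 2, half_pos hδ, ?_⟩
  filter_upwards [thickening_mem_nhdsSet E (half_pos hδ)] with z hz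
  calc ball z (δ / 2) ⊆ thickening (δ / 2) (thickening (δ / 2) E) := ball_subset_thickening hz _
    _ ⊆ thickening (δ / 2 + δ / 2) E := thickening_thickening_subset _ _ _
    _ ⊆ O := by rw [add_halves]; exact hδV.trans hVO

theorem exists_contDiff_laplacian_nonpos (hE : IsCompact E) (hrR : r < R)
    {T : ℝ} (hv : Measurable v) (hv1 : ∀ z, 1 ≤ v z) (hvL : BddAbove (range v))
    (hsmv : SuperMeanValueOn v (ball p R)) (hT : ∀ᶠ z in 𝓝ˢ E, T ≤ v z) :
    ∃ w : ℂ → ℝ, ContDiff ℝ 2 w ∧ (∀ z, 1 ≤ w z) ∧ (∀ z ∈ ball p r, Δ w z ≤ 0) ∧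
      ∫ z in ball p r, w z ≤ ∫ z in ball p R, v z ∧ ∀ᶠ z in 𝓝ˢ E, T ≤ w z := by
  obtain ⟨L, hL⟩ := hvL
  have hL (z : ℂ) : v z ≤ L := hL (mem_range_self z)
  have hv0 (z : ℂ) : 0 ≤ v z := zero_le_one.trans (hv1 z)
  have hT' : ∀ᶠ z in 𝓝ˢ E, max T 0 ≤ v z := hT.mono fun z hz => max_le hz (hv0 z)
  obtain ⟨δ, hδ, hδE⟩ := exists_pos_eventually_ball_subset hE hT'
  have hε : 0 < min δ (R - r) := lt_min hδ (sub_pos.2 hrR)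
  let φ : ContDiffBump (0 : ℂ) := ⟨min δ (R - r) / 2, min δ (R - r), half_pos hε, half_lt_self hε⟩
  have hball : ball p (r + φ.rOut) ⊆ ball p R :=
    ball_subset_ball (by linarith [min_le_right δ (R - r)])
  have hsmv' := (hsmv.mono hball).normed_convolution φ hv hv0 hL
  have hC := contDiff_normed_convolution φ hv hv0 hL
  refine ⟨_, hC, fun z => le_normed_convolution φ hv hv0 hL zero_le_one fun y _ => hv1 y,
    fun z hz => hsmv'.laplacian_nonpos isOpen_ball hC hz, ?_, ?_⟩
  · refine (setIntegral_ball_normed_convolution_le φ hv hv0 hL).trans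
      (setIntegral_mono_set ?_ (.of_forall hv0) hball.eventuallyLE)
    exact Measure.integrableOn_of_bounded measure_ball_lt_top.ne hv.aestronglyMeasurable
      (.of_forall fun z => (Real.norm_of_nonneg (hv0 z)).trans_le (hL z))
  · filter_upwards [hδE] with z hz
    exact (le_max_left T 0).trans (le_normed_convolution φ hv hv0 hL (le_max_right T 0) fun y hy =>
      hz (ball_subset_ball (min_le_left δ (R - r)) hy))

theorem hasZeroCapacityIn_of_superMeanValueOn (hr : 0 < r) (hrR : r < R) (hE : IsCompact E)
    (h : ∀ T : ℝ, ∃ v : ℂ → ℝ, Measurable v ∧ (∀ z, 1 ≤ v z) ∧ BddAbove (range v) ∧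
      SuperMeanValueOn v (ball p R) ∧ ∫ z in ball p R, v z ≤ J ∧ ∀ᶠ z in 𝓝ˢ E, T ≤ v z) :
    HasZeroCapacityIn E (ball p r) := by
  obtain ⟨s, hrs, hsR⟩ := exists_between hrR
  obtain ⟨A, hA⟩ := exists_forall_eLpNorm_log_le hr hrs p J
  refine hasZeroCapacityIn_of_forall_exists_le (A := A) fun M => ?_
  obtain ⟨v, hv, hv1, hvL, hsmv, hvJ, hvE⟩ := h (Real.exp M)
  obtain ⟨w, hw, hw1, hΔ, hwv, hwE⟩ :=
    exists_contDiff_laplacian_nonpos hE hsR hv hv1 hvL hsmv hvE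
  have hw0 (z : ℂ) : 0 < w z := zero_lt_one.trans_le (hw1 z)
  refine ⟨fun z => Real.log (w z), (hw.of_le one_le_two).log fun z => (hw0 z).ne', ?_,
    hA w hw hw1 hΔ (hwv.trans hvJ)⟩
  filter_upwards [hwE] with z hz
  exact (Real.le_log_iff_exp_le (hw0 z)).2 hz

end ZeroCapacity

section Truncation

/-- The truncation `max u (-n)` of an extended-real-valued function, as a real-valued function:
the one whose circle averages define `SubharmonicOn`. It takes the junk value `0` where
`u = ⊤`. -/
noncomputable def truncBelow (u : ℂ → EReal) (n : ℕ) (z : ℂ) : ℝ :=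
  (max (u z) (-(n : ℝ) : EReal)).toReal

/-- The truncation `A + 1 - max u (-n)` of a superharmonic function on `S`, continued by `1`
outside `S` so as to be measurable and bounded everywhere if `u ≤ A` on `S`. -/
noncomputable def superTrunc (u : ℂ → EReal) (S : Set ℂ) (A : ℝ) (n : ℕ) (z : ℂ) : ℝ :=
  1 + S.indicator (fun w => A - truncBelow u n w) z

variable {u : ℂ → EReal} {U S K : Set ℂ} {A R : ℝ} {n : ℕ} {c p z : ℂ}

theorem circleIntegrable_of_measurable {E : Type*} [NormedAddCommGroup E] [MeasurableSpace E]
    [OpensMeasurableSpace E] [SecondCountableTopology E] {f : ℂ → E} {L : ℝ} (hf : Measurable f)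
    (hL : ∀ w, ‖f w‖ ≤ L) (c : ℂ) (R : ℝ) : CircleIntegrable f c R :=
  (intervalIntegrable_const (c := L)).mono_fun
    (hf.comp (continuous_circleMap c R).measurable).aestronglyMeasurable
    (.of_forall fun _ => (hL _).trans (le_abs_self L))

theorem coe_truncBelow (hz : u z ≠ ⊤) :
    (truncBelow u n z : EReal) = max (u z) (-(n : ℝ) : EReal) :=
  EReal.coe_toReal (by simp [max_eq_top, hz, EReal.natCast_ne_bot])
    (by simp [EReal.natCast_ne_top])

theorem truncBelow_le_iff (hz : u z ≠ ⊤) {a : ℝ} (ha : -(n : ℝ) ≤ a) :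
    truncBelow u n z ≤ a ↔ u z ≤ a := by
  rw [← EReal.coe_le_coe_iff, coe_truncBelow hz, max_le_iff, and_iff_left]
  exact_mod_cast ha

theorem neg_le_truncBelow (hz : u z ≠ ⊤) : -(n : ℝ) ≤ truncBelow u n z := by
  rw [← EReal.coe_le_coe_iff, coe_truncBelow hz]
  exact_mod_cast le_max_right _ _

theorem toReal_le_truncBelow (hz : u z ≠ ⊤) (hz' : u z ≠ ⊥) :
    (u z).toReal ≤ truncBelow u n z := by
  rw [← EReal.coe_le_coe_iff, coe_truncBelow hz, EReal.coe_toReal hz hz']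
  exact le_max_left _ _

theorem measurable_superTrunc (hu : UpperSemicontinuousOn u S) (hS : MeasurableSet S) (A : ℝ)
    (n : ℕ) : Measurable (superTrunc u S A n) := by
  have hmeas : Measurable (S.domRestrict u) := (upperSemicontinuousOn_iff_restrict.2 hu).measurable
  have hmeas' : Measurable fun w : S => A - truncBelow u n w :=
    measurable_const.sub (hmeas.max measurable_const).ereal_toReal
  have hind : Measurable (S.indicator fun w => A - truncBelow u n w) := by
    classical
    rw [← piecewise_eq_indicator]
    refine measurable_of_restrict_of_restrict_compl hS ?_ ?_
    · rwa [domRestrict_piecewise]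
    · rw [domRestrict_piecewise_compl]
      exact measurable_const
  exact measurable_const.add hind

theorem superTrunc_of_mem (hz : z ∈ S) : superTrunc u S A n z = A + 1 - truncBelow u n z := by
  rw [superTrunc, indicator_of_mem hz]
  ring

theorem one_le_superTrunc (hu : ∀ w ∈ S, u w ≠ ⊤) (hA : 0 ≤ A) (huA : ∀ w ∈ S, u w ≤ A) (z : ℂ) :
    1 ≤ superTrunc u S A n z :=
  le_add_of_nonneg_right <| indicator_nonneg (fun w hw => sub_nonneg.2 <|
    (truncBelow_le_iff (hu w hw) ((neg_nonpos.2 n.cast_nonneg).trans hA)).2 (huA w hw)) z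

theorem superTrunc_le (hu : ∀ w ∈ S, u w ≠ ⊤) (hA : 0 ≤ A) (z : ℂ) :
    superTrunc u S A n z ≤ 1 + (A + n) := by
  have h : ∀ w ∈ S, A - truncBelow u n w ≤ A + n := fun w hw => by
    linarith [neg_le_truncBelow (n := n) (hu w hw)]
  exact add_le_add_right (indicator_le' h (fun _ _ => add_nonneg hA n.cast_nonneg) z) 1

theorem norm_superTrunc_le (hu : ∀ w ∈ S, u w ≠ ⊤) (hA : 0 ≤ A) (huA : ∀ w ∈ S, u w ≤ A) (z : ℂ) :
    ‖superTrunc u S A n z‖ ≤ 1 + (A + n) := by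
  rw [Real.norm_of_nonneg (zero_le_one.trans (one_le_superTrunc hu hA huA z))]
  exact superTrunc_le hu hA z

theorem le_superTrunc {T : ℝ} (hz : z ∈ S) (hA : 0 ≤ A) (hT : T ≤ n) (hu : u z ≤ (-T : ℝ)) :
    T ≤ superTrunc u S A n z := by
  rw [superTrunc_of_mem hz]
  linarith [(truncBelow_le_iff (hu.trans_lt (EReal.coe_lt_top _)).ne (neg_le_neg hT)).2 hu]

theorem superTrunc_le_of_ne_bot (hz : z ∈ S) (hz' : u z ≠ ⊤) (hz'' : u z ≠ ⊥) :
    superTrunc u S A n z ≤ A + 1 - (u z).toReal := by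
  rw [superTrunc_of_mem hz]
  exact sub_le_sub_left (toReal_le_truncBelow hz' hz'') _

theorem SubharmonicOn.ne_top (hu : SubharmonicOn u U) (hz : z ∈ U) : u z ≠ ⊤ :=
  (hu.2.1 z hz).ne

theorem SubharmonicOn.exists_forall_le (hu : SubharmonicOn u U) (hK : IsCompact K) (hKU : K ⊆ U) :
    ∃ A : ℝ, 0 ≤ A ∧ ∀ z ∈ K, u z ≤ A := by
  obtain rfl | hne := K.eq_empty_or_nonempty
  · exact ⟨0, le_rfl, by simp⟩
  obtain ⟨w, hw, hmax⟩ := (hu.1.mono hKU).exists_isMaxOn hne hK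
  refine ⟨max 0 (u w).toReal, le_max_left _ _, fun z hz => (hmax hz).trans ?_⟩
  exact (EReal.le_coe_toReal (hu.ne_top (hKU hw))).trans (mod_cast le_max_right _ _)

theorem SubharmonicOn.truncBelow_le (hu : SubharmonicOn u U) (hR : 0 < R)
    (hball : closedBall c R ⊆ U) (h : -(n : ℝ) ≤ circleAverage (truncBelow u n) c R) :
    truncBelow u n c ≤ circleAverage (truncBelow u n) c R := by
  have hc : c ∈ U := hball (mem_closedBall_self hR.le)
  rw [truncBelow_le_iff (hu.ne_top hc) h]
  exact (hu.2.2 c hc R hR hball).trans (iInf_le _ n)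

theorem SubharmonicOn.superMeanValueOn_superTrunc (hu : SubharmonicOn u U) (hS : MeasurableSet S)
    (hSU : S ⊆ U) (hA : 0 ≤ A) (huA : ∀ w ∈ S, u w ≤ A) :
    SuperMeanValueOn (superTrunc u S A n) S := by
  intro c R hR hball
  have htop : ∀ w ∈ S, u w ≠ ⊤ := fun w hw => hu.ne_top (hSU hw)
  have hint : CircleIntegrable (superTrunc u S A n) c R :=
    circleIntegrable_of_measurable (measurable_superTrunc (hu.1.mono hSU) hS A n)
      (norm_superTrunc_le htop hA huA) c R
  have havg : circleAverage (truncBelow u n) c R =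
      A + 1 - circleAverage (superTrunc u S A n) c R := by
    rw [← circleAverage_const (A + 1) c R,
      ← circleAverage_fun_sub (circleIntegrable_const _ _ _) hint]
    refine circleAverage_congr_sphere fun w hw => ?_
    rw [abs_of_pos hR] at hw
    simp only [superTrunc_of_mem (hball (sphere_subset_closedBall hw)), sub_sub_cancel]
  have hn : -(n : ℝ) ≤ circleAverage (truncBelow u n) c R := by
    linarith [circleAverage_mono_on_of_le_circle hint fun w _ => superTrunc_le htop hA w]
  linarith [hu.truncBelow_le hR (hball.trans hSU) hn,
    superTrunc_of_mem (u := u) (A := A) (n := n) (hball (mem_closedBall_self hR.le))]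

theorem SubharmonicOn.integrableOn_superTrunc (hu : SubharmonicOn u U) (hS : MeasurableSet S)
    (hSU : S ⊆ U) (hA : 0 ≤ A) (huA : ∀ w ∈ S, u w ≤ A) (c : ℂ) (R : ℝ) :
    IntegrableOn (superTrunc u S A n) (ball c R) :=
  Measure.integrableOn_of_bounded measure_ball_lt_top.ne
    (measurable_superTrunc (hu.1.mono hSU) hS A n).aestronglyMeasurable
    (.of_forall (norm_superTrunc_le (fun _ hw => hu.ne_top (hSU hw)) hA huA))

theorem SubharmonicOn.setIntegral_superTrunc_le (hu : SubharmonicOn u U) (hR : 0 ≤ R)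
    (hball : closedBall c R ⊆ U) (hc : u c ≠ ⊥) (hA : 0 ≤ A)
    (huA : ∀ w ∈ closedBall c R, u w ≤ A) :
    ∫ z in ball c R, superTrunc u (closedBall c R) A n z ≤ π * R ^ 2 * (A + 1 - (u c).toReal) := by
  have hc' : c ∈ closedBall c R := mem_closedBall_self hR
  refine setIntegral_ball_le_of_circleAverage_le hR
    (hu.integrableOn_superTrunc measurableSet_closedBall hball hA huA c R) fun r hr => ?_
  exact (hu.superMeanValueOn_superTrunc measurableSet_closedBall hball hA huA hr.1
    (closedBall_subset_closedBall hr.2.le)).trans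
      (superTrunc_le_of_ne_bot hc' (hu.ne_top (hball hc')) hc)

end Truncation

section Polar

variable {u : ℂ → EReal} {U E K : Set ℂ} {r R : ℝ} {c p : ℂ}

theorem SubharmonicOn.volume_eq_bot_inter_ball (hu : SubharmonicOn u U) (hR : 0 ≤ R)
    (hball : closedBall c R ⊆ U) (hc : u c ≠ ⊥) : volume ({z | u z = ⊥} ∩ ball c R) = 0 := by
  obtain ⟨A, hA, huA⟩ := hu.exists_forall_le (isCompact_closedBall c R) hball
  set P := {z | u z = ⊥} ∩ ball c R
  set J := π * R ^ 2 * (A + 1 - (u c).toReal)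
  have hP : volume P ≠ ⊤ := measure_ne_top_of_subset inter_subset_right measure_ball_lt_top.ne
  have hmarkov (n : ℕ) : n * volume.real P ≤ J := by
    have htop : ∀ w ∈ closedBall c R, u w ≠ ⊤ := fun w hw => hu.ne_top (hball hw)
    have hsub : P ⊆ {z | (n : ℝ) ≤ superTrunc u (closedBall c R) A n z} := fun z hz =>
      le_superTrunc (ball_subset_closedBall hz.2) hA le_rfl (hz.1.trans_le bot_le)
    calc n * volume.real P
      _ = n * (volume.restrict (ball c R)).real P := by
        rw [measureReal_restrict_apply' measurableSet_ball, inter_assoc, inter_self]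
      _ ≤ n * (volume.restrict (ball c R)).real
          {z | (n : ℝ) ≤ superTrunc u (closedBall c R) A n z} := by
        gcongr
        rw [Measure.restrict_apply' measurableSet_ball]
        exact measure_ne_top_of_subset inter_subset_right measure_ball_lt_top.ne
      _ ≤ ∫ z in ball c R, superTrunc u (closedBall c R) A n z :=
        mul_meas_ge_le_integral_of_nonneg
          (.of_forall fun z => zero_le_one.trans (one_le_superTrunc htop hA huA z))
          (hu.integrableOn_superTrunc measurableSet_closedBall hball hA huA c R) n
      _ ≤ J := hu.setIntegral_superTrunc_le hR hball hc hA huA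
  rw [← measureReal_eq_zero_iff hP]
  refine le_antisymm (le_of_not_gt fun h => ?_) measureReal_nonneg
  obtain ⟨n, hn⟩ := exists_nat_gt (J / volume.real P)
  exact (hmarkov n).not_gt ((div_lt_iff₀ h).1 hn)

theorem exists_mem_ball_notMem (h : volume (E ∩ ball p r) = 0) (hr : 0 < r) :
    ∃ z ∈ ball p r, z ∉ E := by
  by_contra! hE
  exact (measure_ball_pos volume p hr).ne' (inter_eq_right.2 hE ▸ h)

theorem SubharmonicOn.exists_mem_ball_ne_bot (hu : SubharmonicOn u U) (hUo : IsOpen U)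
    (hUc : IsPreconnected U) (hne : ∃ z ∈ U, u z ≠ ⊥) (hp : p ∈ U) :
    ∃ c R, closedBall c R ⊆ U ∧ u c ≠ ⊥ ∧ p ∈ ball c R := by
  let V := {z | ∃ c R, closedBall c R ⊆ U ∧ u c ≠ ⊥ ∧ z ∈ ball c R}
  have hV : IsOpen V := isOpen_iff_mem_nhds.2 fun z ⟨c, R, hball, hc, hz⟩ => by
    filter_upwards [isOpen_ball.mem_nhds hz] with w hw using ⟨c, R, hball, hc, hw⟩
  suffices h : U ⊆ V from h hp
  refine hUc.subset_of_closure_inter_subset hV ?_ ?_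
  · obtain ⟨z, hz, huz⟩ := hne
    obtain ⟨R, hR, hball⟩ := nhds_basis_closedBall.mem_iff.1 (hUo.mem_nhds hz)
    exact ⟨z, hz, z, R, hball, huz, mem_ball_self hR⟩
  · rintro z ⟨hz, hzU⟩
    obtain ⟨R, hR, hball⟩ := nhds_basis_closedBall.mem_iff.1 (hUo.mem_nhds hzU)
    obtain ⟨y, ⟨c, ρ, hcρ, hc, hy⟩, hyz⟩ := Metric.mem_closure_iff.1 hz (R / 4) (by positivity)
    have hnull := hu.volume_eq_bot_inter_ball (pos_of_mem_ball hy).le hcρ hc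
    obtain ⟨s, hs, hsρ⟩ := Metric.isOpen_iff.1 isOpen_ball y hy
    obtain ⟨x, hx, hux⟩ := exists_mem_ball_notMem (measure_mono_null (inter_subset_inter_right _
      ((ball_subset_ball (min_le_left s (R / 4))).trans hsρ)) hnull) (by positivity)
    have hxz : dist x z < R / 2 := by
      linarith [dist_triangle_right x z y, (mem_ball.1 hx).trans_le (min_le_right s (R / 4))]
    exact ⟨x, R / 2, (closedBall_subset_closedBall' (by linarith)).trans hball, hux,
      mem_ball'.2 (dist_comm x z ▸ hxz)⟩

theorem SubharmonicOn.eventually_nhdsSet_lt (hu : SubharmonicOn u U) (hKU : K ⊆ interior U)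
    (hKu : ∀ z ∈ K, u z = ⊥) (a : ℝ) : ∀ᶠ z in 𝓝ˢ K, u z < a := by
  refine eventually_nhdsSet_iff_forall.2 fun z hz => ?_
  have h := hu.1 z (interior_subset (hKU hz)) a ((hKu z hz).trans_lt (EReal.bot_lt_coe a))
  rwa [nhdsWithin_eq_nhds.2 (mem_interior_iff_mem_nhds.1 (hKU hz))] at h

theorem SubharmonicOn.hasZeroCapacityIn {ρ : ℝ} (hu : SubharmonicOn u U) (hr : 0 < r)
    (hrρ : r < ρ) (hρ : ball p ρ ⊆ ball c R) (hball : closedBall c R ⊆ U) (hc : u c ≠ ⊥)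
    (hK : IsCompact K) (hKρ : K ⊆ ball p ρ) (hKu : ∀ z ∈ K, u z = ⊥) :
    HasZeroCapacityIn K (ball p r) := by
  obtain ⟨A, hA, huA⟩ := hu.exists_forall_le (isCompact_closedBall c R) hball
  have hball' := ball_subset_closedBall.trans hball
  have htop : ∀ w ∈ closedBall c R, u w ≠ ⊤ := fun w hw => hu.ne_top (hball hw)
  have hR : 0 ≤ R := (pos_of_mem_ball (hρ (mem_ball_self (hr.trans hrρ)))).le
  refine hasZeroCapacityIn_of_superMeanValueOn (J := π * R ^ 2 * (A + 1 - (u c).toReal))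
    hr hrρ hK fun T => ?_
  obtain ⟨n, hn⟩ := exists_nat_ge T
  have hle := one_le_superTrunc (n := n) htop hA huA
  refine ⟨superTrunc u (closedBall c R) A n,
    measurable_superTrunc (hu.1.mono hball) measurableSet_closedBall A n, hle,
    ⟨1 + (A + n), forall_mem_range.2 (superTrunc_le htop hA)⟩,
    (hu.superMeanValueOn_superTrunc measurableSet_closedBall hball hA huA).mono
      (hρ.trans ball_subset_closedBall), ?_, ?_⟩
  · refine (setIntegral_mono_set ?_ ?_ hρ.eventuallyLE).trans
      (hu.setIntegral_superTrunc_le hR hball hc hA huA)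
    · exact hu.integrableOn_superTrunc measurableSet_closedBall hball hA huA c R
    · exact .of_forall fun z => zero_le_one.trans (hle z)
  · filter_upwards [hu.eventually_nhdsSet_lt
        ((hKρ.trans hρ).trans (isOpen_ball.subset_interior_iff.2 hball')) hKu (-T),
      isOpen_ball.mem_nhdsSet.2 (hKρ.trans hρ)] with z hz hzR
    exact le_superTrunc (ball_subset_closedBall hzR) hA hn hz.le

end Polar

section PolarRemovability

variable {D K : Set ℂ} {f : ℂ → ℂ} {p : ℂ}

theorem PolarSet.exists_subharmonicOn (hK : PolarSet K) (hp : p ∈ K) :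
    ∃ U u c R, SubharmonicOn u U ∧ closedBall c R ⊆ U ∧ u c ≠ ⊥ ∧ p ∈ ball c R ∧
      ∀ z ∈ K ∩ ball c R, u z = ⊥ := by
  obtain ⟨U, hUo, hUc, hpU, u, hu, hne, hKu⟩ := hK p hp
  obtain ⟨c, R, hball, hc, hpc⟩ := hu.exists_mem_ball_ne_bot hUo hUc.isPreconnected hne hpU
  exact ⟨U, u, c, R, hu, hball, hc, hpc, fun z hz =>
    hKu z ⟨hz.1, hball (ball_subset_closedBall hz.2)⟩⟩

theorem PolarSet.volume_eq_zero (hK : PolarSet K) : volume K = 0 := by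
  refine measure_null_of_locally_null K fun p hp => ?_
  obtain ⟨U, u, c, R, hu, hball, hc, hpc, hKu⟩ := hK.exists_subharmonicOn hp
  refine ⟨K ∩ ball c R, inter_mem_nhdsWithin K (isOpen_ball.mem_nhds hpc), measure_mono_null
    (t := {z | u z = ⊥} ∩ ball c R) (fun z hz => ⟨hKu z hz, hz.2⟩)
    (hu.volume_eq_bot_inter_ball (pos_of_mem_ball hpc).le hball hc)⟩

theorem PolarSet.exists_hasZeroCapacityIn (hK : PolarSet K) (hp : p ∈ K) :
    ∃ ρ > 0, ∀ r, 0 < r → r < ρ → ∀ E ⊆ K ∩ ball p ρ, IsCompact E →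
      HasZeroCapacityIn E (ball p r) := by
  obtain ⟨U, u, c, R, hu, hball, hc, hpc, hKu⟩ := hK.exists_subharmonicOn hp
  obtain ⟨ρ, hρ, hρR⟩ := Metric.isOpen_iff.1 isOpen_ball p hpc
  exact ⟨ρ, hρ, fun r hr hrρ E hEK hE => hu.hasZeroCapacityIn hr hrρ hρR hball hc hE
    (hEK.trans inter_subset_right) fun z hz => hKu z ⟨(hEK hz).1, hρR (hEK hz).2⟩⟩

theorem memLp_two_of_mem_L2h {E : Type*} [NormedAddCommGroup E] [NormedSpace ℂ E] [MeasureSpace E]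
    [OpensMeasurableSpace E] {Ω : Set E} {g : E → ℂ} (hΩ : MeasurableSet Ω) (hg : g ∈ L2h Ω) :
    MemLp g 2 (volume.restrict Ω) := by
  refine ⟨hg.1.continuousOn.aestronglyMeasurable hΩ, ?_⟩
  rw [eLpNorm_lt_top_iff_lintegral_rpow_enorm_lt_top two_ne_zero ENNReal.ofNat_ne_top]
  simpa only [ENNReal.toReal_ofNat, ENNReal.rpow_ofNat, enorm_eq_nnnorm] using hg.2

theorem PolarSet.exists_ball_differentiableOn_eqOn (hK : PolarSet K) (hD : IsOpen D)
    (hDK : IsOpen (D \ K)) (hf : f ∈ L2h (D \ K)) (hp : p ∈ D) (hpK : p ∈ K) :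
    ∃ δ > 0, ∃ G, DifferentiableOn ℂ G (ball p δ) ∧ EqOn G f (ball p δ \ K) := by
  obtain ⟨ρ, hρ, hcap⟩ := hK.exists_hasZeroCapacityIn hpK
  obtain ⟨s, hs, hsD⟩ := nhds_basis_closedBall.mem_iff.1 (hD.mem_nhds hp)
  obtain ⟨r, hr, hrlt⟩ := exists_between (lt_min hρ hs)
  obtain ⟨hrρ, hrs⟩ := lt_min_iff.1 hrlt
  have hrD : closedBall p r ⊆ D := (closedBall_subset_closedBall hrs.le).trans hsD
  have hdiff : ball p r \ (closedBall p r \ (D \ K)) = ball p r ∩ (D \ K) := by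
    rw [sdiff_sdiff_right, sdiff_eq_empty.2 ball_subset_closedBall, empty_union]
  have hE : closedBall p r \ (D \ K) ⊆ K ∩ ball p ρ := fun z hz =>
    ⟨by_contra fun hzK => hz.2 ⟨hrD hz.1, hzK⟩, closedBall_subset_ball hrρ hz.1⟩
  have hf2 : MemLp f 2 (volume.restrict (ball p r ∩ (D \ K))) :=
    (memLp_two_of_mem_L2h hDK.measurableSet hf).mono_measure
      (Measure.restrict_mono_set volume inter_subset_right)
  obtain ⟨G, hG, hGf⟩ := (hcap r hr hrρ _ hE
      ((isCompact_closedBall p r).diff hDK)).exists_differentiableOn_eqOn (f := f) hr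
    (hdiff ▸ isOpen_ball.inter hDK) (hdiff ▸ hf.1.mono inter_subset_right) (hdiff ▸ hf2)
  exact ⟨r / 2, half_pos hr, G, hG, hGf.mono (sdiff_subset_sdiff_right fun z hz => (hE hz).1)⟩

theorem eqOn_extendFrom_of_eqOn {X Y : Type*} [TopologicalSpace X] [TopologicalSpace Y]
    [T2Space Y] {A V : Set X} {f g : X → Y} (hA : Dense A) (hV : IsOpen V) (hg : ContinuousOn g V)
    (h : EqOn g f (V ∩ A)) : EqOn (extendFrom A f) g V := by
  intro x hx
  refine extendFrom_eq (hA x) (((hg.continuousAt (hV.mem_nhds hx)).tendsto.mono_left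
    nhdsWithin_le_nhds).congr' ?_)
  filter_upwards [mem_nhdsWithin_of_mem_nhds (hV.mem_nhds hx), self_mem_nhdsWithin] with y hyV hyA
  exact h ⟨hyV, hyA⟩

theorem differentiableOn_extendFrom {𝕜 E F : Type*} [NontriviallyNormedField 𝕜]
    [NormedAddCommGroup E] [NormedSpace 𝕜 E] [NormedAddCommGroup F] [NormedSpace 𝕜 F] {A D : Set E}
    {f : E → F} (hA : Dense A) (h : ∀ p ∈ D, ∃ V, IsOpen V ∧ p ∈ V ∧ ∃ g : E → F,
      DifferentiableOn 𝕜 g V ∧ EqOn g f (V ∩ A)) : DifferentiableOn 𝕜 (extendFrom A f) D := by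
  intro p hp
  obtain ⟨V, hV, hpV, g, hg, hgf⟩ := h p hp
  have hext := eqOn_extendFrom_of_eqOn hA hV hg.continuousOn hgf
  exact ((hg.differentiableAt (hV.mem_nhds hpV)).congr_of_eventuallyEq
    (hext.eventuallyEq_of_mem (hV.mem_nhds hpV))).differentiableWithinAt

theorem PolarSet.exists_differentiableOn_eqOn (hK : PolarSet K) (hD : IsOpen D)
    (hDK : IsOpen (D \ K)) (hf : f ∈ L2h (D \ K)) :
    ∃ F, DifferentiableOn ℂ F D ∧ EqOn F f (D \ K) := by
  have hdense : Dense Kᶜ := Measure.dense_of_ae (measure_eq_zero_iff_ae_notMem.1 hK.volume_eq_zero)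
  refine ⟨extendFrom Kᶜ f, differentiableOn_extendFrom hdense fun p hp => ?_,
    eqOn_extendFrom_of_eqOn hdense hDK hf.1.continuousOn fun _ _ => rfl⟩
  by_cases hpK : p ∈ K
  · obtain ⟨δ, hδ, G, hG, hGf⟩ := hK.exists_ball_differentiableOn_eqOn hD hDK hf hp hpK
    exact ⟨ball p δ, isOpen_ball, mem_ball_self hδ, G, hG, hGf⟩
  · exact ⟨D \ K, hDK, ⟨hp, hpK⟩, f, hf.1, fun _ _ => rfl⟩

end PolarRemovability

section BergmanSpace

theorem eqOn_of_eqOn_sdiff_of_measure_eq_zero {X Y : Type*} [TopologicalSpace X]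
    [MeasurableSpace X] {μ : Measure X} [μ.IsOpenPosMeasure] [TopologicalSpace Y] [T2Space Y]
    {D K : Set X} {F G : X → Y} (hD : IsOpen D) (hK : μ K = 0) (hF : ContinuousOn F D)
    (hG : ContinuousOn G D) (h : EqOn F G (D \ K)) : EqOn F G D :=
  h.of_subset_closure hF hG sdiff_subset <|
    (Measure.dense_of_ae (measure_eq_zero_iff_ae_notMem.1 hK)).open_subset_closure_inter hD

theorem setLIntegral_nnnorm_sq_eq_of_eqOn {α β : Type*} [MeasureSpace α] [NNNorm β] {D K : Set α}
    {F f : α → β} (hDK : MeasurableSet (D \ K)) (hK : volume K = 0)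
    (h : EqOn F f (D \ K)) :
    ∫⁻ z in D, (‖F z‖₊ : ℝ≥0∞) ^ 2 = ∫⁻ z in D \ K, (‖f z‖₊ : ℝ≥0∞) ^ 2 := by
  rw [← setLIntegral_congr (sdiff_null_ae_eq_self hK)]
  exact setLIntegral_congr_fun hDK fun z hz => by simp only [h hz]

variable {E : Type*} [NormedAddCommGroup E] [NormedSpace ℂ E] [MeasureSpace E] {D K : Set E}

theorem L2h_subset_L2h {Ω : Set E} (h : Ω ⊆ D) : L2h D ⊆ L2h Ω :=
  fun _ hf => ⟨hf.1.mono h, (lintegral_mono_set h).trans_lt hf.2⟩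

theorem bergmanKernel_sdiff_eq [(volume : Measure E).IsOpenPosMeasure] (hD : IsOpen D)
    (hDK : MeasurableSet (D \ K)) (hK : volume K = 0)
    (hext : ∀ f ∈ L2h (D \ K), ∃ F ∈ L2h D, EqOn F f (D \ K)) {z : E} (hz : z ∈ D \ K) :
    bergmanKernel (D \ K) z = bergmanKernel D z := by
  refine le_antisymm ?_ ?_
  · refine iSup₂_le fun f hf => iSup_le fun ⟨w, hw, hfw⟩ => ?_
    obtain ⟨F, hF, hFf⟩ := hext f hf
    rw [← setLIntegral_nnnorm_sq_eq_of_eqOn hDK hK hFf, ← hFf hz]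
    exact le_iSup₂_of_le F hF (le_iSup_of_le ⟨w, hw.1, hFf hw ▸ hfw⟩ le_rfl)
  · refine iSup₂_le fun f hf => iSup_le fun ⟨w, hw, hfw⟩ => ?_
    rw [setLIntegral_nnnorm_sq_eq_of_eqOn hDK hK fun _ _ => rfl]
    refine le_iSup₂_of_le f (L2h_subset_L2h sdiff_subset hf) (le_iSup_of_le ?_ le_rfl)
    by_contra! hzero
    exact hfw (eqOn_of_eqOn_sdiff_of_measure_eq_zero hD hK hf.1.continuousOn continuousOn_const
      hzero hw)

end BergmanSpace

end

theorem restriction_bijective_of_compact_polar_general (D : Set ℂ) (hopen : IsOpen D) (K : Set ℂ)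
    (hDK : IsOpen (D \ K)) (hKpolar : PolarSet K) :
    (∀ F ∈ L2h D, F ∈ L2h (D \ K)) ∧
    (∀ F ∈ L2h D, ∀ G ∈ L2h D, Set.EqOn F G (D \ K) → Set.EqOn F G D) ∧
    (∀ f ∈ L2h (D \ K), ∃ F ∈ L2h D, Set.EqOn F f (D \ K)) ∧
    (∀ z ∈ D \ K, bergmanKernel (D \ K) z = bergmanKernel D z) := by
  have hK := hKpolar.volume_eq_zero
  have hext : ∀ f ∈ L2h (D \ K), ∃ F ∈ L2h D, Set.EqOn F f (D \ K) := fun f hf => by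
    obtain ⟨F, hF, hFf⟩ := hKpolar.exists_differentiableOn_eqOn hopen hDK hf
    exact ⟨F, ⟨hF, setLIntegral_nnnorm_sq_eq_of_eqOn hDK.measurableSet hK hFf ▸ hf.2⟩, hFf⟩
  exact ⟨fun _ hF => L2h_subset_L2h sdiff_subset hF,
    fun _ hF _ hG h => eqOn_of_eqOn_sdiff_of_measure_eq_zero hopen hK hF.1.continuousOn
      hG.1.continuousOn h,
    hext, fun _ hz => bergmanKernel_sdiff_eq hopen hDK.measurableSet hK hext hz⟩

/-- If `D̃ ⊆ ℂ` is a bounded domain and `K ⊆ D̃` is a compact polar set, then the restriction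
map `L²ₕ(D̃) → L²ₕ(D̃ \ K)` is a bijection (it is well defined, injective and surjective),
and consequently the Bergman kernels of `D̃` and `D̃ \ K` coincide on `D̃ \ K`. -/
theorem restriction_bijective_of_compact_polar (D : Set ℂ)
    (hopen : IsOpen D) (hconn : IsConnected D) (hbd : Bornology.IsBounded D)
    (K : Set ℂ) (hKD : K ⊆ D) (hKcompact : IsCompact K) (hKpolar : PolarSet K) :
    (∀ F ∈ L2h D, F ∈ L2h (D \ K)) ∧
    (∀ F ∈ L2h D, ∀ G ∈ L2h D, Set.EqOn F G (D \ K) → Set.EqOn F G D) ∧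
    (∀ f ∈ L2h (D \ K), ∃ F ∈ L2h D, Set.EqOn F f (D \ K)) ∧
    (∀ z ∈ D \ K, bergmanKernel (D \ K) z = bergmanKernel D z) :=
  restriction_bijective_of_compact_polar_general D hopen K (hopen.sdiff hKcompact.isClosed) hKpolar
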